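/- Let s, α ∈ ℕ with α ≥ 3, let β, g ∈ ℕ with β ≥ 2α, g ≥ 2αs and g ≥ ⌊s(β−1)/2⌋, and let b ≥ βgs be a prime. Then there exists a constant A > 0 (depending only on α, β, b, s) such that for every w ∈ ℕ, the digital net P ⊂ [0,1)^s of the paper's construction, of cardinality N = b^{gw}, satisfies ∑_{k ∈ ℕ₀^s \ {0,...,b^{βgw}−1}^s} ∑_{l ∈ P∞⊥ \ {0}} |K̂_{α,s}(k,l)| ≤ A · (log N)^{sα} / N^{3α}. -/

import Mathlib

open scoped BigOperators

/-- The `i`-th digit (starting from `i = 0`) of the `b`-adic expansion of `k`. -/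
def bdigit (b k i : ℕ) : ℕ := k / b ^ i % b

/-- The set of indices of nonzero `b`-adic digits of `k`. -/
def bsupp (b k : ℕ) : Finset ℕ := (Finset.range (k + 1)).filter fun i => bdigit b k i ≠ 0

/-- The Hamming metric `κ(k)`: the number of nonzero `b`-adic digits of `k`. -/
def hamming (b k : ℕ) : ℕ := (bsupp b k).card

/-- The Dick metric `μ_α(k)`: the sum of the `min(v, α)` largest exponents-plus-one
`a_1 > a_2 > ⋯` of the nonzero `b`-adic digits of `k`. -/
def dick (b α k : ℕ) : ℕ := ((((bsupp b k).sort (· ≤ ·)).reverse.take α).map (· + 1)).sum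

/-- Digitwise addition `k ⊕ l` modulo `b` of the `b`-adic digits. -/
def dadd (b k l : ℕ) : ℕ :=
  ∑ i ∈ Finset.range (k + l + 1), (bdigit b k i + bdigit b l i) % b * b ^ i

/-- Digitwise subtraction `k ⊖ l` modulo `b` of the `b`-adic digits. -/
def dsub (b k l : ℕ) : ℕ :=
  ∑ i ∈ Finset.range (k + l + 1), (bdigit b k i + (b - bdigit b l i)) % b * b ^ i

/-- Hamming metric of a vector: sum over coordinates. -/
def hammingVec (b : ℕ) {s : ℕ} (k : Fin s → ℕ) : ℕ := ∑ j, hamming b (k j)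

/-- Dick metric of a vector: sum over coordinates. -/
def dickVec (b α : ℕ) {s : ℕ} (k : Fin s → ℕ) : ℕ := ∑ j, dick b α (k j)

/-- The column vector of the first `n` `b`-adic digits of `k`, as a vector over `F_b = ZMod b`. -/
def trv (b n : ℕ) (k : ℕ) : Fin n → ZMod b := fun i => (bdigit b k i.1 : ZMod b)

/-- The dual net `P⊥` of the digital net with generating matrices `C`. -/
def dualNet (b : ℕ) {s n m : ℕ} (C : Fin s → Matrix (Fin n) (Fin m) (ZMod b)) :
    Set (Fin s → ℕ) :=
  {k | (∀ j, k j < b ^ n) ∧ ∑ j, ((C j).transpose).mulVec (trv b n (k j)) = 0}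

/-- The dual net `P∞⊥` of the digital net with generating matrices `C` (no upper bound
on the components of `k`). -/
def dualNetInf (b : ℕ) {s n m : ℕ} (C : Fin s → Matrix (Fin n) (Fin m) (ZMod b)) :
    Set (Fin s → ℕ) :=
  {k | ∑ j, ((C j).transpose).mulVec (trv b n (k j)) = 0}

/-- The `h`-th point of the digital net generated by the matrices `C` over `ZMod b`:
its `j`-th coordinate is `∑_{i=1}^n ξ_i b^{-i}` with `(ξ_1,…,ξ_n)ᵀ = C_j · (η_0,…,η_{m-1})ᵀ`,
where `η` are the `b`-adic digits of `h`. -/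
noncomputable def netPoint (b : ℕ) {s n m : ℕ} (C : Fin s → Matrix (Fin n) (Fin m) (ZMod b))
    (h : ℕ) : Fin s → ℝ :=
  fun j => ∑ i : Fin n,
    (((C j).mulVec (fun v : Fin m => (bdigit b h v.1 : ZMod b)) i).val : ℝ) / (b : ℝ) ^ (i.1 + 1)

/-- Sum of the `α` largest elements of a finite set of (0-based) row indices, counted
1-based, i.e. each index `i` contributes `i + 1`. -/
def topSum (α : ℕ) (R : Finset ℕ) : ℕ := (((R.sort (· ≤ ·)).reverse.take α).map (· + 1)).sum

/-- The digital net with generating matrices `C_1,…,C_s ∈ F_b^{n×m}` is an order `α`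
digital `(t,m,s)`-net: for every choice of rows `i_{j,v_j} < ⋯ < i_{j,1}` from each `C_j`
such that the 1-based indices of the `min(α, v_j)` largest chosen rows of each matrix sum
to at most `αm - t`, the chosen rows are linearly independent over `F_b`. -/
def isOrderNet (b α t m : ℕ) {s n : ℕ} (C : Fin s → Matrix (Fin n) (Fin m) (ZMod b)) : Prop :=
  ∀ R : Fin s → Finset (Fin n),
    (∑ j, topSum α ((R j).image Fin.val)) ≤ α * m - t →
    LinearIndependent (ZMod b) fun p : Σ j : Fin s, {i : Fin n // i ∈ R j} => C p.1 p.2.1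

/-- The minimum Dick metric `μ_α(P)` of the digital net with generating matrices `C`,
namely the minimum of `μ_α(k)` over nonzero elements `k` of the dual net. -/
noncomputable def minDick (b α : ℕ) {s n m : ℕ}
    (C : Fin s → Matrix (Fin n) (Fin m) (ZMod b)) : ℕ :=
  sInf (dickVec b α '' {k | k ∈ dualNet b C ∧ k ≠ 0})

/-- The minimum Hamming metric `κ(P)` of the digital net with generating matrices `C`. -/
noncomputable def minHamming (b : ℕ) {s n m : ℕ}
    (C : Fin s → Matrix (Fin n) (Fin m) (ZMod b)) : ℕ :=
  sInf (hammingVec b '' {k | k ∈ dualNet b C ∧ k ≠ 0})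

/-- The Chen–Skriganov generating matrix (for one coordinate `j`, with row parameters
`βr l = β_{j,l}`): the entry in (1-based) row `u = (l-1)w + i` and column `v` is
`binom(v-1, i-1) · β_{j,l}^{v-i}` (which vanishes when `v < i` since the binomial
coefficient is `0`). Indices here are 0-based. -/
def csMatrix (b w n : ℕ) (βr : ℕ → ZMod b) : Matrix (Fin n) (Fin n) (ZMod b) :=
  Matrix.of fun u v =>
    (Nat.choose v.1 (u.1 % w) : ZMod b) * βr (u.1 / w) ^ (v.1 - u.1 % w)

/-- Dick's digit interlacing composition with interlacing factor `α` applied to the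
generating matrices `C_1,…,C_{αs} ∈ F_b^{m×m}`: the resulting matrices
`D_1,…,D_s ∈ F_b^{αm×m}` are such that the (1-based) `(α(h-1)+i)`-th row of `D_j` is the
`h`-th row of `C_{α(j-1)+i}`. -/
def interlace {R : Type*} (α s m : ℕ) (C : Fin (α * s) → Matrix (Fin m) (Fin m) R) :
    Fin s → Matrix (Fin (α * m)) (Fin m) R :=
  fun j => Matrix.of fun r v =>
    C ⟨α * j.1 + r.1 % α, by
        have hα : 0 < α := by
          rcases Nat.eq_zero_or_pos α with h | h
          · exact absurd r.2 (by simp [h])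
          · exact h
        have h1 : α * (j.1 + 1) ≤ α * s := Nat.mul_le_mul_left α j.2
        have h2 : α * (j.1 + 1) = α * j.1 + α := by ring
        have h3 : r.1 % α < α := Nat.mod_lt _ hα
        omega⟩
      ⟨r.1 / α, by
        have hα : 0 < α := by
          rcases Nat.eq_zero_or_pos α with h | h
          · exact absurd r.2 (by simp [h])
          · exact h
        exact Nat.div_lt_of_lt_mul r.2⟩
      v

open MeasureTheory

/-- The `i`-th (for `i ≥ 1`) `b`-adic digit `ξ_i` of a real number `x ∈ [0,1)`, using the
expansion in which infinitely many digits differ from `b - 1`. -/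
noncomputable def rdigit (b : ℕ) (x : ℝ) (i : ℕ) : ℤ := ⌊x * (b : ℝ) ^ i⌋ % b

/-- The `k`-th `b`-adic Walsh function, `wal_k(x) = ω_b^{κ_0 ξ_1 + κ_1 ξ_2 + ⋯}` where
`ω_b = exp(2π√-1/b)`, `κ` are the `b`-adic digits of `k` and `ξ` those of `x`. -/
noncomputable def walsh (b k : ℕ) (x : ℝ) : ℂ :=
  Complex.exp (2 * (Real.pi : ℂ) * Complex.I / (b : ℂ) *
    ∑ a ∈ Finset.range (k + 1), (bdigit b k a : ℂ) * (rdigit b x (a + 1) : ℂ))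

/-- The `k`-th `b`-adic Walsh function on `[0,1)^s`, `wal_k(x) = ∏_j wal_{k_j}(x_j)`. -/
noncomputable def walshVec (b : ℕ) {s : ℕ} (k : Fin s → ℕ) (x : Fin s → ℝ) : ℂ :=
  ∏ j, walsh b (k j) (x j)

/-- The Bernoulli polynomial `B_r` evaluated at a real number. -/
noncomputable def bernoulliPoly (r : ℕ) (x : ℝ) : ℝ := Polynomial.aeval x (Polynomial.bernoulli r)

/-- The reproducing kernel `K_α` of the Sobolev space `H_α`:
`K_α(x,y) = ∑_{r=0}^{α} B_r(x)B_r(y)/(r!)² + (-1)^{α+1} B_{2α}(|x-y|)/(2α)!`. -/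
noncomputable def Kker (α : ℕ) (x y : ℝ) : ℝ :=
  ∑ r ∈ Finset.range (α + 1), bernoulliPoly r x * bernoulliPoly r y / ((r.factorial : ℝ)) ^ 2
    + (-1 : ℝ) ^ (α + 1) * bernoulliPoly (2 * α) |x - y| / ((2 * α).factorial : ℝ)

/-- The `(k,l)`-th Walsh coefficient of the kernel `K_α`. -/
noncomputable def Khat (b α : ℕ) (k l : ℕ) : ℂ :=
  ∫ x in Set.Ico (0 : ℝ) 1, ∫ y in Set.Ico (0 : ℝ) 1,
    (Kker α x y : ℂ) * (starRingEnd ℂ) (walsh b k x) * walsh b l y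

/-- The `(k,l)`-th Walsh coefficient of the `s`-variate kernel
`K_{α,s}(x,y) = ∏_j K_α(x_j, y_j)`. -/
noncomputable def KhatS (b α s : ℕ) (k l : Fin s → ℕ) : ℂ :=
  ∫ x in Set.univ.pi fun _ : Fin s => Set.Ico (0 : ℝ) 1,
    ∫ y in Set.univ.pi fun _ : Fin s => Set.Ico (0 : ℝ) 1,
      ((∏ j, Kker α (x j) (y j) : ℝ) : ℂ) * (starRingEnd ℂ) (walshVec b k x) * walshVec b l y

/-- The `k`-th Walsh coefficient `b̂_r(k)` of the normalized Bernoulli polynomial `B_r/r!`. -/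
noncomputable def bhat (b r k : ℕ) : ℂ :=
  ∫ x in Set.Ico (0 : ℝ) 1,
    ((bernoulliPoly r x / (r.factorial : ℝ) : ℝ) : ℂ) * (starRingEnd ℂ) (walsh b k x)

/-- The `(k,l)`-th Walsh coefficient `b̂_{r,per}(k,l)` of `(x,y) ↦ B̃_r(x-y)/r!`, where
`B̃_r` is the 1-periodic extension of the Bernoulli polynomial `B_r` from `[0,1)` to `ℝ`. -/
noncomputable def bhatPer (b r : ℕ) (k l : ℕ) : ℂ :=
  ∫ x in Set.Ico (0 : ℝ) 1, ∫ y in Set.Ico (0 : ℝ) 1,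
    ((bernoulliPoly r (Int.fract (x - y)) / (r.factorial : ℝ) : ℝ) : ℂ) *
      (starRingEnd ℂ) (walsh b k x) * walsh b l y

/-!
The Walsh coefficients satisfy `|K̂_{α,s}(k,l)| ≤ D b^{-μ_α(k)} b^{-μ_α(l)}`, so the double sum is
at most a constant times the product of two single sums.

*Decay of the coefficients.* Each integration of a Walsh function `wal_k` removes the leading
digit of `k` and gains a factor of order `b^{-a_1}`, so `min(v, α)` integrations gain
`b^{-μ_α(k)}` up to a constant, and all these primitives vanish at `0` and `1`. The kernel
`K_α(x, y)` is a polynomial plus a multiple of `max(x - y, 0)^{2α-1}`: against a polynomial one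
integrates by parts, and integrating against the truncated power is a `2α`-fold primitive, up to `α`
of whose integrations can be moved onto the other factor.

*Sum over `k`.* Splitting off the leading digit gives a recursion for `∑_{k < b^n} b^{-μ_α(k)}`.
These sums are bounded for `α ≥ 2`, and hence for `α ≥ 3` the frequencies outside the box of side
`b^{βm}` contribute only `O(b^{-βm})`.

*Sum over `l`.* The rows of the Chen–Skriganov matrices evaluate Hasse derivatives at distinct
nodes, so by Hermite interpolation any leading rows, at most `m` in total, are independent. After
interlacing this means that `μ_α(l) ≥ αm - O(1)` on the dual net without `0`, and that a box of
`b^{F_1} × ⋯ × b^{F_s}` consecutive frequencies contains at most `b^{(∑ F_j - m)_+}` dual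
elements. Group the dual elements by the `α` leading digits of their coordinates, and let `F_j` be
the position of the last of these. A group has weight at most `b^{-T}` with
`T = μ_α - (∑ F_j - m)_+ ≥ αm - O(1)`, and only `O(T^{sα})` groups share the same `T`, so the total
is `O(m^{sα} b^{-αm})`.
-/

/-! ### Digits and the leading digit -/

lemma bdigit_eq_zero_of_lt {b k i : ℕ} (h : k < b ^ i) : bdigit b k i = 0 := by
  simp only [bdigit, Nat.div_eq_of_lt h, Nat.zero_mod]

lemma bdigit_zero (b i : ℕ) : bdigit b 0 i = 0 := by
  simp only [bdigit, Nat.zero_div, Nat.zero_mod]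

lemma mem_bsupp {b : ℕ} (hb : 1 < b) {k i : ℕ} : i ∈ bsupp b k ↔ bdigit b k i ≠ 0 := by
  simp only [bsupp, Finset.mem_filter, Finset.mem_range, and_iff_right_iff_imp]
  intro h
  by_contra! hki
  exact h (bdigit_eq_zero_of_lt
    ((Nat.lt_pow_self hb).trans_le (Nat.pow_le_pow_right hb.le (by omega))))

lemma lt_of_mem_bsupp {b n k i : ℕ} (hb : 1 < b) (hk : k < b ^ n) (hi : i ∈ bsupp b k) :
    i < n := by
  by_contra! h
  exact (mem_bsupp hb).1 hi
    (bdigit_eq_zero_of_lt (hk.trans_le (Nat.pow_le_pow_right hb.le h)))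

lemma bsupp_zero (b : ℕ) : bsupp b 0 = ∅ := by
  simp only [bsupp, bdigit_zero, ne_eq, not_true, Finset.filter_false]

lemma eq_of_bdigit_eq {b : ℕ} (hb : 1 < b) {k l : ℕ} (h : ∀ i, bdigit b k i = bdigit b l i) :
    k = l := by
  have mod_eq : ∀ n, k % b ^ n = l % b ^ n := by
    intro n
    induction n with
    | zero => simp only [pow_zero, Nat.mod_one]
    | succ n ih =>
      have digit_eq : k / b ^ n % b = l / b ^ n % b := h n
      rw [pow_succ, Nat.mod_mul, Nat.mod_mul, ih, digit_eq]
  have lt_pow : ∀ i ≤ k + l, i < b ^ (k + l) := fun i hi =>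
    hi.trans_lt (Nat.lt_pow_self hb)
  simpa only [Nat.mod_eq_of_lt (lt_pow k (Nat.le_add_right _ _)),
    Nat.mod_eq_of_lt (lt_pow l (Nat.le_add_left _ _))] using mod_eq (k + l)

section LeadingDigit

variable {b n c r : ℕ}

lemma leading_lt_pow_succ (hc : c < b) (hr : r < b ^ n) : c * b ^ n + r < b ^ (n + 1) :=
  calc c * b ^ n + r < c * b ^ n + b ^ n := by omega
    _ = (c + 1) * b ^ n := by ring
    _ ≤ b * b ^ n := Nat.mul_le_mul_right _ hc
    _ = b ^ (n + 1) := (pow_succ' b n).symm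

lemma lt_of_leading_lt_pow {m : ℕ} (hb : 1 < b) (hc0 : 0 < c) (h : c * b ^ n + r < b ^ m) :
    n < m := by
  refine (Nat.pow_lt_pow_iff_right hb).1 (lt_of_le_of_lt ?_ h)
  exact (Nat.le_mul_of_pos_left _ hc0).trans (Nat.le_add_right _ _)

lemma log_leading (hc0 : 0 < c) (hc : c < b) (hr : r < b ^ n) :
    Nat.log b (c * b ^ n + r) = n :=
  Nat.log_eq_of_pow_le_of_lt_pow
    ((Nat.le_mul_of_pos_left _ hc0).trans (Nat.le_add_right _ _)) (leading_lt_pow_succ hc hr)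

lemma leading_mod (hr : r < b ^ n) : (c * b ^ n + r) % b ^ n = r := by
  rw [Nat.mul_add_mod', Nat.mod_eq_of_lt hr]

lemma leading_div {i : ℕ} (hb : 1 < b) (hi : i ≤ n) :
    (c * b ^ n + r) / b ^ i = c * b ^ (n - i) + r / b ^ i := by
  rw [← Nat.add_sub_cancel' hi, pow_add, mul_left_comm, Nat.mul_add_div (by positivity),
    Nat.add_sub_cancel_left]

lemma eq_zero_or_leading (hb : 1 < b) (k : ℕ) :
    k = 0 ∨ ∃ n c r, 0 < c ∧ c < b ∧ r < b ^ n ∧ k = c * b ^ n + r := by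
  rcases eq_or_ne k 0 with hk | hk
  · exact Or.inl hk
  refine Or.inr ⟨Nat.log b k, k / b ^ Nat.log b k, k % b ^ Nat.log b k,
    Nat.div_pos (Nat.pow_log_le_self b hk) (by positivity), ?_, Nat.mod_lt _ (by positivity),
    (Nat.div_add_mod' _ _).symm⟩
  rw [Nat.div_lt_iff_lt_mul (by positivity), ← pow_succ']
  exact Nat.lt_pow_succ_log_self hb k

lemma bdigit_leading_of_lt {i : ℕ} (hb : 1 < b) (hi : i < n) :
    bdigit b (c * b ^ n + r) i = bdigit b r i := by
  obtain ⟨d, hd⟩ : ∃ d, n - i = d + 1 := ⟨n - i - 1, by omega⟩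
  rw [bdigit, bdigit, leading_div hb hi.le, hd, pow_succ, ← mul_assoc, Nat.mul_add_mod']

lemma bdigit_leading_self (hb : 1 < b) (hc : c < b) (hr : r < b ^ n) :
    bdigit b (c * b ^ n + r) n = c := by
  rw [bdigit, leading_div hb le_rfl, Nat.sub_self, pow_zero, mul_one, Nat.div_eq_of_lt hr,
    add_zero, Nat.mod_eq_of_lt hc]

lemma bsupp_leading (hb : 1 < b) (hc0 : 0 < c) (hc : c < b) (hr : r < b ^ n) :
    bsupp b (c * b ^ n + r) = insert n (bsupp b r) := by
  ext i
  rw [Finset.mem_insert, mem_bsupp hb, mem_bsupp hb]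
  rcases lt_trichotomy i n with hi | rfl | hi
  · simp only [bdigit_leading_of_lt hb hi, hi.ne, false_or]
  · simp only [bdigit_leading_self hb hc hr, hc0.ne', ne_eq, not_false_eq_true, true_or]
  · have hpow : b ^ (n + 1) ≤ b ^ i := Nat.pow_le_pow_right hb.le hi
    have hr' : r < b ^ i := hr.trans_le (Nat.pow_le_pow_right hb.le hi.le)
    simp only [bdigit_eq_zero_of_lt ((leading_lt_pow_succ hc hr).trans_le hpow),
      bdigit_eq_zero_of_lt hr', hi.ne', ne_eq, not_true, or_self]

end LeadingDigit

/-! ### The Dick metric -/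

lemma sort_insert_of_forall_lt {S : Finset ℕ} {n : ℕ} (h : ∀ i ∈ S, i < n) :
    (insert n S).sort (· ≤ ·) = S.sort (· ≤ ·) ++ [n] := by
  have hn : n ∉ S := fun hn => lt_irrefl _ (h n hn)
  refine List.Perm.eq_of_pairwise (le := (· ≤ ·)) (fun _ _ _ _ => le_antisymm)
    (Finset.pairwise_sort _ _) ?_ ?_
  · rw [List.pairwise_append]
    refine ⟨Finset.pairwise_sort _ _, List.pairwise_singleton _ _, fun i hi m hm => ?_⟩
    rw [List.mem_singleton.1 hm]
    exact (h i ((Finset.mem_sort _).1 hi)).le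
  · rw [← Multiset.coe_eq_coe, Finset.sort_eq, ← Multiset.coe_add, Finset.sort_eq,
      Finset.insert_val_of_notMem hn, Multiset.coe_singleton, add_comm, Multiset.singleton_add]

lemma dick_zero_left (b k : ℕ) : dick b 0 k = 0 := by
  simp only [dick, List.take_zero, List.map_nil, List.sum_nil]

lemma dick_zero_right (b α : ℕ) : dick b α 0 = 0 := by
  simp only [dick, bsupp_zero, Finset.sort_empty, List.reverse_nil, List.take_nil, List.map_nil,
    List.sum_nil]

lemma dick_leading {b n c r : ℕ} (α : ℕ) (hb : 1 < b) (hc0 : 0 < c) (hc : c < b)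
    (hr : r < b ^ n) : dick b (α + 1) (c * b ^ n + r) = n + 1 + dick b α r := by
  rw [dick, bsupp_leading hb hc0 hc hr,
    sort_insert_of_forall_lt fun _ => lt_of_mem_bsupp hb hr]
  simp only [List.reverse_append, List.reverse_singleton, List.singleton_append,
    List.take_succ_cons, List.map_cons, List.sum_cons, dick]

lemma le_dick_of_pow_le {b α n k : ℕ} (hb : 1 < b) (hα : 0 < α) (hk : b ^ n ≤ k) :
    n + 1 ≤ dick b α k := by
  obtain ⟨a, rfl⟩ := Nat.exists_eq_add_one.2 hα
  obtain rfl | ⟨m, c, r, hc0, hc, hr, rfl⟩ := eq_zero_or_leading hb k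
  · exact absurd hk (Nat.not_le.2 (Nat.pow_pos (by omega)))
  · have hnm : n < m + 1 :=
      (Nat.pow_lt_pow_iff_right hb).1 (hk.trans_lt (leading_lt_pow_succ hc hr))
    rw [dick_leading a hb hc0 hc hr]
    omega

lemma dick_le_dickVec (b α : ℕ) {s : ℕ} (k : Fin s → ℕ) (j : Fin s) :
    dick b α (k j) ≤ dickVec b α k :=
  Finset.single_le_sum (f := fun j => dick b α (k j)) (fun _ _ => Nat.zero_le _)
    (Finset.mem_univ j)

/-! ### Primitives -/

/-- The primitive `x ↦ ∫₀ˣ f` of `f`. -/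
noncomputable def primitive (f : ℝ → ℂ) : ℝ → ℂ := fun x => ∫ t in (0 : ℝ)..x, f t

/-- Measurable, locally integrable, right-continuous functions. The primitive of such a function
has it as right derivative everywhere, which is what integration by parts against Walsh functions
needs. -/
structure IsRightIntegrand (f : ℝ → ℂ) : Prop where
  measurable : Measurable f
  intervalIntegrable : ∀ a b : ℝ, IntervalIntegrable f volume a b
  continuousWithinAt : ∀ x, ContinuousWithinAt f (Set.Ici x) x

namespace IsRightIntegrand

variable {f : ℝ → ℂ}

lemma of_continuous (hf : Continuous f) : IsRightIntegrand f :=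
  ⟨hf.measurable, fun a b => hf.intervalIntegrable a b, fun _ => hf.continuousWithinAt⟩

lemma mul_continuous {W : ℝ → ℂ} (hf : IsRightIntegrand f) (hW : Continuous W) :
    IsRightIntegrand fun x => f x * W x :=
  ⟨hf.measurable.mul hW.measurable,
    fun a b => (hf.intervalIntegrable a b).mul_continuousOn hW.continuousOn,
    fun x => (hf.continuousWithinAt x).mul hW.continuousWithinAt⟩

lemma conj (hf : IsRightIntegrand f) : IsRightIntegrand fun x => (starRingEnd ℂ) (f x) := by
  have hm : Measurable fun x => (starRingEnd ℂ) (f x) :=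
    Complex.continuous_conj.measurable.comp hf.measurable
  refine ⟨hm, fun a b => ?_, fun x =>
    Complex.continuous_conj.continuousAt.comp_continuousWithinAt (hf.continuousWithinAt x)⟩
  exact (hf.intervalIntegrable a b).mono_fun hm.aestronglyMeasurable
    (ae_of_all _ fun x => (RCLike.norm_conj (f x)).le)

lemma continuous_primitive (hf : IsRightIntegrand f) : Continuous (primitive f) :=
  intervalIntegral.continuous_primitive hf.intervalIntegrable 0

lemma iterate (hf : IsRightIntegrand f) (i : ℕ) : IsRightIntegrand (primitive^[i] f) := by
  induction i generalizing f with
  | zero => exact hf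
  | succ _ ih => exact ih (of_continuous hf.continuous_primitive)

lemma hasDerivWithinAt_primitive (hf : IsRightIntegrand f) (x : ℝ) :
    HasDerivWithinAt (primitive f) (f x) (Set.Ioi x) x :=
  (intervalIntegral.integral_hasDerivWithinAt_right (s := Set.Ici x) (t := Set.Ioi x)
    (hf.intervalIntegrable 0 x) hf.measurable.stronglyMeasurable.stronglyMeasurableAtFilter
    ((hf.continuousWithinAt x).mono Set.Ioi_subset_Ici_self)).mono Set.Ioi_subset_Ici_self

end IsRightIntegrand

lemma primitive_zero (f : ℝ → ℂ) : primitive f 0 = 0 :=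
  intervalIntegral.integral_same

lemma primitive_conj (f : ℝ → ℂ) :
    primitive (fun x => (starRingEnd ℂ) (f x)) = fun x => (starRingEnd ℂ) (primitive f x) := by
  funext x
  simp only [primitive, intervalIntegral, map_sub, integral_conj]

lemma primitive_iterate_conj (i : ℕ) (f : ℝ → ℂ) :
    primitive^[i] (fun x => (starRingEnd ℂ) (f x)) =
      fun x => (starRingEnd ℂ) (primitive^[i] f x) := by
  induction i generalizing f with
  | zero => rfl
  | succ i ih => rw [Function.iterate_succ_apply, primitive_conj, ih]; rfl

lemma periodic_primitive {h : ℝ → ℂ} {d : ℝ} (hh : ∀ a b, IntervalIntegrable h volume a b)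
    (hint : ∀ x, ∫ t in x..(x + d), h t = 0) : Function.Periodic (primitive h) d := by
  intro x
  rw [primitive, primitive, ← intervalIntegral.integral_add_adjacent_intervals (hh 0 x)
    (hh x (x + d)), hint, add_zero]

lemma norm_primitive_le_of_periodic {h : ℝ → ℂ} {d C : ℝ} (hd : 0 < d)
    (hper : Function.Periodic (primitive h) d) (hC : ∀ x, ‖h x‖ ≤ C) (x : ℝ) :
    ‖primitive h x‖ ≤ C * d := by
  obtain ⟨y, hy, hxy⟩ := hper.exists_mem_Ico₀ hd x
  have hC0 : 0 ≤ C := (norm_nonneg _).trans (hC 0)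
  calc ‖primitive h x‖ = ‖∫ t in (0 : ℝ)..y, h t‖ := by rw [hxy, primitive]
    _ ≤ C * |y - 0| := intervalIntegral.norm_integral_le_of_norm_le_const fun x _ => hC x
    _ = C * y := by rw [sub_zero, abs_of_nonneg hy.1]
    _ ≤ C * d := mul_le_mul_of_nonneg_left hy.2.le hC0

lemma integral_eq_zero_of_shift_eq_mul {h : ℝ → ℂ} {ζ : ℂ} {d δ : ℝ}
    (hper : Function.Periodic h d) (hshift : ∀ x, h (x + δ) = ζ * h x) (hζ : ζ ≠ 1) (x : ℝ) :
    ∫ t in x..(x + d), h t = 0 := by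
  have shifted : ∫ t in x..(x + d), h t = ζ * ∫ t in x..(x + d), h t :=
    calc ∫ t in x..(x + d), h t = ∫ t in (x + δ)..(x + δ + d), h t :=
          hper.intervalIntegral_add_eq x (x + δ)
      _ = ∫ t in x..(x + d), h (t + δ) := by
          rw [intervalIntegral.integral_comp_add_right, add_right_comm]
      _ = ζ * ∫ t in x..(x + d), h t := by
          simp only [hshift, intervalIntegral.integral_const_mul]
  have : (ζ - 1) * ∫ t in x..(x + d), h t = 0 := by rw [sub_mul, ← shifted, one_mul, sub_self]
  exact (mul_eq_zero.1 this).resolve_left (sub_ne_zero.2 hζ)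

/-- At a jump of `c` the product with the primitive stays continuous because the primitive
vanishes there. -/
lemma primitive_mul_of_eventuallyEq {c h : ℝ → ℂ} {C : ℝ} (hh : IsRightIntegrand h)
    (hch : IsRightIntegrand fun x => c x * h x) (hC : ∀ x, ‖c x‖ ≤ C)
    (hc : ∀ x, ∀ᶠ y in nhdsWithin x (Set.Ici x), c y = c x)
    (hjump : ∀ x, ContinuousAt c x ∨ primitive h x = 0) :
    primitive (fun x => c x * h x) = fun x => c x * primitive h x := by
  have hcont : Continuous fun x => c x * primitive h x := by
    refine continuous_iff_continuousAt.2 fun x => ?_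
    rcases hjump x with hx | hx
    · exact hx.mul hh.continuous_primitive.continuousAt
    · have hlim : Filter.Tendsto (primitive h) (nhds x) (nhds 0) :=
        hx ▸ hh.continuous_primitive.tendsto x
      rw [ContinuousAt, hx, mul_zero]
      exact Filter.isBoundedUnder_le_mul_tendsto_zero
        (Filter.isBoundedUnder_of ⟨C, hC⟩) hlim
  have hderiv : ∀ x, HasDerivWithinAt (fun x => c x * primitive h x) (c x * h x) (Set.Ioi x) x := by
    intro x
    refine ((hh.hasDerivWithinAt_primitive x).const_mul (c x)).congr_of_eventuallyEq ?_ rfl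
    filter_upwards [nhdsWithin_mono x Set.Ioi_subset_Ici_self (hc x)] with y hy
    rw [hy]
  funext x
  rw [primitive, intervalIntegral.integral_eq_sub_of_hasDeriv_right hcont.continuousOn
    (fun y _ => hderiv y) (hch.intervalIntegrable 0 x), primitive_zero, mul_zero, sub_zero]

/-! ### Walsh functions and their iterated primitives -/

/-- The primitive root of unity `ω_b = exp(2π√-1/b)`. -/
noncomputable def walshRoot (b : ℕ) : ℂ := Complex.exp (2 * Real.pi * Complex.I / b)

lemma walshRoot_ne_zero (b : ℕ) : walshRoot b ≠ 0 :=
  Complex.exp_ne_zero _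

lemma walshRoot_pow_zpow_emod {b : ℕ} (hb : b ≠ 0) (c : ℕ) (z : ℤ) :
    (walshRoot b ^ c) ^ (z % b) = (walshRoot b ^ c) ^ z := by
  have hroot : (walshRoot b ^ c) ^ b = 1 := by
    rw [pow_right_comm, walshRoot, (Complex.isPrimitiveRoot_exp b hb).pow_eq_one, one_pow]
  conv_rhs => rw [← Int.emod_add_mul_ediv z b]
  rw [zpow_add₀ (pow_ne_zero _ (walshRoot_ne_zero b)), zpow_mul, zpow_natCast _ b, hroot,
    one_zpow, mul_one]

lemma walsh_zero (b : ℕ) (x : ℝ) : walsh b 0 x = 1 := by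
  simp only [walsh, bdigit_zero, Nat.cast_zero, zero_mul, Finset.sum_const_zero, mul_zero,
    Complex.exp_zero]

lemma norm_walsh (b k : ℕ) (x : ℝ) : ‖walsh b k x‖ = 1 := by
  have : walsh b k x = Complex.exp (((2 * Real.pi / b *
      ∑ a ∈ Finset.range (k + 1), (bdigit b k a : ℝ) * (rdigit b x (a + 1) : ℝ) : ℝ) : ℂ) *
        Complex.I) := by
    rw [walsh]; push_cast; congr 1; ring
  rw [this, Complex.norm_exp_ofReal_mul_I]

section Walsh

variable {b : ℕ}

lemma walsh_eq (hb : 1 < b) {k n : ℕ} (hk : k < b ^ n) (x : ℝ) :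
    walsh b k x = Complex.exp (2 * (Real.pi : ℂ) * Complex.I / (b : ℂ) *
      ∑ a ∈ Finset.range n, (bdigit b k a : ℂ) * (rdigit b x (a + 1) : ℂ)) := by
  have sum_eq : ∀ M : ℕ, bsupp b k ⊆ Finset.range M →
      ∑ a ∈ Finset.range M, (bdigit b k a : ℂ) * (rdigit b x (a + 1) : ℂ) =
      ∑ a ∈ bsupp b k, (bdigit b k a : ℂ) * (rdigit b x (a + 1) : ℂ) := by
    refine fun M hM => (Finset.sum_subset hM fun a _ ha => ?_).symm
    rw [mem_bsupp hb, not_not] at ha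
    rw [ha, Nat.cast_zero, zero_mul]
  rw [walsh, sum_eq _ (Finset.filter_subset _ _),
    sum_eq n fun i hi => Finset.mem_range.2 (lt_of_mem_bsupp hb hk hi)]

lemma walsh_congr (hb : 1 < b) {k m : ℕ} (hk : k < b ^ m) {x y : ℝ}
    (h : ⌊x * (b : ℝ) ^ m⌋ = ⌊y * (b : ℝ) ^ m⌋) : walsh b k x = walsh b k y := by
  have floor_eq : ∀ (z : ℝ) (a : ℕ), a < m →
      ⌊z * (b : ℝ) ^ (a + 1)⌋ = ⌊z * (b : ℝ) ^ m⌋ / ((b ^ (m - a - 1) : ℕ) : ℤ) := by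
    intro z a ha
    rw [← Int.floor_div_natCast, Nat.cast_pow]
    congr 1
    rw [eq_div_iff (by positivity), mul_assoc, ← pow_add]
    congr 2
    omega
  rw [walsh_eq hb hk, walsh_eq hb hk]
  congr 2
  refine Finset.sum_congr rfl fun a ha => ?_
  rw [rdigit, rdigit, floor_eq x a (Finset.mem_range.1 ha), floor_eq y a (Finset.mem_range.1 ha), h]

lemma walsh_eventuallyEq_right (hb : 1 < b) (k : ℕ) (x : ℝ) :
    ∀ᶠ y in nhdsWithin x (Set.Ici x), walsh b k y = walsh b k x := by
  have hB : (0 : ℝ) < (b : ℝ) ^ k := by positivity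
  have hx : x < (⌊x * (b : ℝ) ^ k⌋ + 1) / (b : ℝ) ^ k :=
    (lt_div_iff₀ hB).2 (Int.lt_floor_add_one _)
  filter_upwards [Ico_mem_nhdsGE hx] with y hy
  refine walsh_congr hb (Nat.lt_pow_self hb) (Int.floor_eq_iff.2 ⟨?_, (lt_div_iff₀ hB).1 hy.2⟩)
  exact (Int.floor_le _).trans (mul_le_mul_of_nonneg_right hy.1 hB.le)

lemma continuousAt_walsh (hb : 1 < b) {k m : ℕ} (hk : k < b ^ m) {x : ℝ}
    (hx : x * (b : ℝ) ^ m ≠ ⌊x * (b : ℝ) ^ m⌋) : ContinuousAt (walsh b k) x := by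
  have hlt : (⌊x * (b : ℝ) ^ m⌋ : ℝ) < x * (b : ℝ) ^ m := (Int.floor_le _).lt_of_ne' hx
  have hscale : ContinuousAt (fun y : ℝ => y * (b : ℝ) ^ m) x := by fun_prop
  refine continuousAt_const.congr (f := fun _ => walsh b k x) ?_
  filter_upwards [hscale (Ioo_mem_nhds hlt (Int.lt_floor_add_one _))] with y hy
  exact walsh_congr hb hk (Int.floor_eq_iff.2 ⟨hy.1.le, hy.2⟩).symm

lemma isRightIntegrand_walsh (hb : 1 < b) (k : ℕ) : IsRightIntegrand (walsh b k) := by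
  have hm : Measurable (walsh b k) := by
    refine Complex.measurable_exp.comp (Measurable.const_mul ?_ _)
    refine Finset.measurable_fun_sum _ fun a _ => Measurable.const_mul ?_ _
    exact (measurable_of_countable fun z : ℤ => ((z % b : ℤ) : ℂ)).comp
      (measurable_id.mul_const _).floor
  refine ⟨hm, fun u v => ?_, fun x => continuousWithinAt_const.congr_of_eventuallyEq
    (walsh_eventuallyEq_right hb k x) rfl⟩
  refine (intervalIntegrable_const (c := (1 : ℝ))).mono_fun hm.aestronglyMeasurable ?_
  exact ae_of_all _ fun x => ((norm_walsh b k x).trans norm_one.symm).le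

lemma walsh_leading_eq (hb : 1 < b) {c m k : ℕ} (hc : c < b) (hk : k < b ^ m) (x : ℝ) :
    walsh b (c * b ^ m + k) x =
      walsh b k x * (walshRoot b ^ c) ^ ⌊x * (b : ℝ) ^ (m + 1)⌋ := by
  rw [walsh_eq hb (leading_lt_pow_succ hc hk), walsh_eq hb hk, Finset.sum_range_succ, mul_add,
    Complex.exp_add]
  congr 1
  · congr 2
    refine Finset.sum_congr rfl fun a ha => ?_
    rw [bdigit_leading_of_lt hb (Finset.mem_range.1 ha)]
  · rw [bdigit_leading_self hb hc hk, ← walshRoot_pow_zpow_emod (by omega), rdigit, walshRoot,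
      ← zpow_natCast (Complex.exp _) c, ← zpow_mul, ← Complex.exp_int_mul]
    congr 1
    push_cast
    ring

lemma walsh_mul_pow (hb : 1 < b) {c : ℕ} (hc : c < b) (m : ℕ) (x : ℝ) :
    walsh b (c * b ^ m) x = (walshRoot b ^ c) ^ ⌊x * (b : ℝ) ^ (m + 1)⌋ := by
  have := walsh_leading_eq hb hc (show 0 < b ^ m by positivity) x
  rwa [add_zero, walsh_zero, one_mul] at this

lemma walsh_shift (hb : 1 < b) {c : ℕ} (hc : c < b) (m : ℕ) (x : ℝ) :
    walsh b (c * b ^ m) (x + ((b : ℝ) ^ (m + 1))⁻¹) = walshRoot b ^ c * walsh b (c * b ^ m) x := by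
  rw [walsh_mul_pow hb hc, walsh_mul_pow hb hc, add_mul, inv_mul_cancel₀ (by positivity),
    Int.floor_add_one, zpow_add_one₀ (pow_ne_zero _ (walshRoot_ne_zero b)), mul_comm]

lemma periodic_inv_pow_of_le (hb : 1 < b) {m n : ℕ} (hmn : m ≤ n) {W : ℝ → ℂ}
    (hW : Function.Periodic W ((b : ℝ) ^ n)⁻¹) : Function.Periodic W ((b : ℝ) ^ m)⁻¹ := by
  have hmul : ((b ^ (n - m) : ℕ) : ℝ) * ((b : ℝ) ^ n)⁻¹ = ((b : ℝ) ^ m)⁻¹ := by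
    rw [Nat.cast_pow, ← Nat.sub_add_cancel hmn, pow_add, Nat.add_sub_cancel, mul_inv,
      mul_inv_cancel_left₀ (by positivity)]
  exact hmul ▸ hW.nat_mul (b ^ (n - m))

lemma periodic_walsh (hb : 1 < b) {c : ℕ} (hc : c < b) (m : ℕ) :
    Function.Periodic (walsh b (c * b ^ m)) ((b : ℝ) ^ m)⁻¹ := by
  intro x
  have hshift : (x + ((b : ℝ) ^ m)⁻¹) * (b : ℝ) ^ (m + 1) = x * (b : ℝ) ^ (m + 1) + (b : ℤ) := by
    rw [add_mul, pow_succ, inv_mul_cancel_left₀ (by positivity), Int.cast_natCast]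
  rw [walsh_mul_pow hb hc, walsh_mul_pow hb hc, hshift, Int.floor_add_intCast,
    ← walshRoot_pow_zpow_emod (by omega), Int.add_emod_right, walshRoot_pow_zpow_emod (by omega)]

/-- A shift by `b^{-(n+1)}` multiplies the factor of the leading digit by a nontrivial root of
unity, so the integral over a period vanishes. -/
lemma integral_walsh_mul_eq_zero (hb : 1 < b) {c m : ℕ} (hc0 : 0 < c) (hc : c < b)
    {W : ℝ → ℂ} (hper : Function.Periodic W ((b : ℝ) ^ (m + 1))⁻¹) (x : ℝ) :
    ∫ t in x..(x + ((b : ℝ) ^ m)⁻¹), walsh b (c * b ^ m) t * W t = 0 := by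
  refine integral_eq_zero_of_shift_eq_mul (δ := ((b : ℝ) ^ (m + 1))⁻¹) (ζ := walshRoot b ^ c)
    ((periodic_walsh hb hc m).mul (periodic_inv_pow_of_le hb m.le_succ hper)) (fun t => ?_) ?_ x
  · simp only [Pi.mul_apply, walsh_shift hb hc, hper t, mul_assoc]
  · exact (Complex.isPrimitiveRoot_exp b (by omega)).pow_ne_one_of_pos_of_lt hc0.ne' hc

lemma primitive_walsh_mul (hb : 1 < b) {c m k : ℕ} (hc0 : 0 < c) (hc : c < b) (hk : k < b ^ m)
    {W : ℝ → ℂ} (hW : Continuous W) (hper : Function.Periodic W ((b : ℝ) ^ (m + 1))⁻¹) :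
    primitive (fun x => walsh b (c * b ^ m + k) x * W x) =
      fun x => walsh b k x * primitive (fun x => walsh b (c * b ^ m) x * W x) x := by
  have hh : IsRightIntegrand fun x => walsh b (c * b ^ m) x * W x :=
    (isRightIntegrand_walsh hb _).mul_continuous hW
  have split : (fun x => walsh b (c * b ^ m + k) x * W x) =
      fun x => walsh b k x * (walsh b (c * b ^ m) x * W x) := by
    funext x
    rw [walsh_leading_eq hb hc hk, walsh_mul_pow hb hc, mul_assoc]
  rw [split]
  refine primitive_mul_of_eventuallyEq hh (split ▸ (isRightIntegrand_walsh hb _).mul_continuous hW)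
    (fun x => (norm_walsh b k x).le) (walsh_eventuallyEq_right hb k) fun x => ?_
  by_cases hx : x * (b : ℝ) ^ m = ⌊x * (b : ℝ) ^ m⌋
  · right
    have hperiod := (periodic_primitive hh.intervalIntegrable
      (integral_walsh_mul_eq_zero hb hc0 hc hper)).int_mul ⌊x * (b : ℝ) ^ m⌋ 0
    rwa [zero_add, ← hx, mul_inv_cancel_right₀ (by positivity), primitive_zero] at hperiod
  · exact Or.inl (continuousAt_walsh hb hk hx)

end Walsh

/-- `f` can be integrated `ρ ≤ α` times with vanishing boundary values at `1`, the last of these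
primitives being bounded by `A` on `[0, 1]`. -/
def PrimitiveDecay (α : ℕ) (f : ℝ → ℂ) (A : ℝ) : Prop :=
  ∃ ρ ≤ α, (∀ i, 1 ≤ i → i ≤ ρ → primitive^[i] f 1 = 0) ∧
    ∀ x ∈ Set.Icc (0 : ℝ) 1, ‖primitive^[ρ] f x‖ ≤ A

lemma PrimitiveDecay.conj {α : ℕ} {f : ℝ → ℂ} {A : ℝ} (h : PrimitiveDecay α f A) :
    PrimitiveDecay α (fun x => (starRingEnd ℂ) (f x)) A := by
  obtain ⟨ρ, hρ, boundary, bound⟩ := h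
  refine ⟨ρ, hρ, fun i hi hi' => ?_, fun x hx => ?_⟩
  · simp only [primitive_iterate_conj, boundary i hi hi', map_zero]
  · rw [primitive_iterate_conj, RCLike.norm_conj]
    exact bound x hx

lemma PrimitiveDecay.of_primitive {α : ℕ} {f : ℝ → ℂ} {A : ℝ} (h1 : primitive f 1 = 0)
    (h : PrimitiveDecay α (primitive f) A) : PrimitiveDecay (α + 1) f A := by
  obtain ⟨ρ, hρ, boundary, bound⟩ := h
  refine ⟨ρ + 1, by omega, fun i hi hi' => ?_, bound⟩
  obtain ⟨i, rfl⟩ := Nat.exists_eq_add_one.2 hi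
  rcases Nat.eq_zero_or_pos i with rfl | hi
  · exact h1
  · exact boundary i hi (by omega)

/-- Each integration strips one leading digit, and the process stops after `α` steps or when no
digit is left. The periodic factor `W` collects what the previous integrations produced. -/
lemma primitiveDecay_walsh_mul {b : ℕ} (hb : 1 < b) (α : ℕ) {k n : ℕ} (hk : k < b ^ n)
    {W : ℝ → ℂ} {C : ℝ} (hW : Continuous W) (hper : Function.Periodic W ((b : ℝ) ^ n)⁻¹)
    (hC : ∀ x, ‖W x‖ ≤ C) :
    PrimitiveDecay α (fun x => walsh b k x * W x) (C * (b : ℝ) ^ α / (b : ℝ) ^ dick b α k) := by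
  have norm_mul_walsh (x : ℝ) {k' : ℕ} : ‖walsh b k' x * W x‖ ≤ C := by
    rw [norm_mul, norm_walsh, one_mul]
    exact hC x
  have hC0 : 0 ≤ C := (norm_nonneg _).trans (hC 0)
  induction α generalizing k n W C with
  | zero =>
    refine ⟨0, le_rfl, fun i h1 h2 => by omega, fun x _ => ?_⟩
    rw [dick_zero_left, pow_zero, mul_one, div_one]
    exact norm_mul_walsh x
  | succ α ih =>
    obtain rfl | ⟨m, c, r, hc0, hc, hr, rfl⟩ := eq_zero_or_leading hb k
    · refine ⟨0, α.succ.zero_le, fun i h1 h2 => by omega, fun x _ => ?_⟩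
      rw [dick_zero_right, pow_zero, div_one]
      exact (norm_mul_walsh x).trans
        (le_mul_of_one_le_right hC0 (one_le_pow₀ (by exact_mod_cast hb.le)))
    have hper' := periodic_inv_pow_of_le hb (lt_of_leading_lt_pow hb hc0 hk) hper
    have hh : IsRightIntegrand fun x => walsh b (c * b ^ m) x * W x :=
      (isRightIntegrand_walsh hb _).mul_continuous hW
    set W' := primitive fun x => walsh b (c * b ^ m) x * W x with hW'
    have periodic_W' : Function.Periodic W' ((b : ℝ) ^ m)⁻¹ :=
      periodic_primitive hh.intervalIntegrable (integral_walsh_mul_eq_zero hb hc0 hc hper')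
    have norm_W' : ∀ x, ‖W' x‖ ≤ C * ((b : ℝ) ^ m)⁻¹ :=
      norm_primitive_le_of_periodic (by positivity) periodic_W' fun x => norm_mul_walsh x
    have W'_one : W' 1 = 0 := by
      have := periodic_inv_pow_of_le hb m.zero_le periodic_W' 0
      rwa [pow_zero, inv_one, zero_add, hW', primitive_zero] at this
    have primitive_eq := primitive_walsh_mul hb hc0 hc hr hW hper'
    have bound_eq : C * (b : ℝ) ^ (α + 1) / (b : ℝ) ^ dick b (α + 1) (c * b ^ m + r) =
        C * ((b : ℝ) ^ m)⁻¹ * (b : ℝ) ^ α / (b : ℝ) ^ dick b α r := by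
      rw [dick_leading α hb hc0 hc hr]
      field_simp
      ring
    refine PrimitiveDecay.of_primitive (by simp only [primitive_eq, ← hW', W'_one, mul_zero]) ?_
    rw [primitive_eq, bound_eq]
    exact ih hr hh.continuous_primitive periodic_W' norm_W'
      (fun x _ => by rw [norm_mul, norm_walsh, one_mul]; exact norm_W' x) (by positivity)

lemma primitiveDecay_walsh {b : ℕ} (hb : 1 < b) (α k : ℕ) :
    PrimitiveDecay α (walsh b k) ((b : ℝ) ^ α / (b : ℝ) ^ dick b α k) := by
  simpa only [mul_one, one_mul] using
    primitiveDecay_walsh_mul hb α (Nat.lt_pow_self hb (n := k)) (W := fun _ => 1) (C := 1)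
      continuous_const (fun _ => rfl) (fun _ => norm_one.le)

/-! ### Decay of the Walsh coefficients of the kernel -/

lemma norm_primitive_le_of_mem_Icc {f : ℝ → ℂ} {C y : ℝ} (hy : y ∈ Set.Icc (0 : ℝ) 1)
    (h : ∀ x ∈ Set.Icc (0 : ℝ) 1, ‖f x‖ ≤ C) : ‖primitive f y‖ ≤ C := by
  have hC : 0 ≤ C := (norm_nonneg _).trans (h 0 ⟨le_rfl, zero_le_one⟩)
  calc ‖primitive f y‖ ≤ C * |y - 0| := by
        refine intervalIntegral.norm_integral_le_of_norm_le_const fun x hx => ?_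
        rw [Set.uIoc_of_le hy.1] at hx
        exact h x ⟨hx.1.le, hx.2.trans hy.2⟩
    _ = C * y := by rw [sub_zero, abs_of_nonneg hy.1]
    _ ≤ C := mul_le_of_le_one_right hC hy.2

lemma norm_primitive_iterate_le {f : ℝ → ℂ} {C : ℝ} (h : ∀ x ∈ Set.Icc (0 : ℝ) 1, ‖f x‖ ≤ C)
    (i : ℕ) : ∀ x ∈ Set.Icc (0 : ℝ) 1, ‖primitive^[i] f x‖ ≤ C := by
  induction i with
  | zero => exact h
  | succ i ih =>
    intro x hx
    rw [Function.iterate_succ_apply']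
    exact norm_primitive_le_of_mem_Icc hx ih

lemma norm_integral_mul_le {f g : ℝ → ℂ} {A B : ℝ} (hf : ∀ x ∈ Set.Icc (0 : ℝ) 1, ‖f x‖ ≤ A)
    (hg : ∀ x ∈ Set.Icc (0 : ℝ) 1, ‖g x‖ ≤ B) : ‖∫ x in (0 : ℝ)..1, f x * g x‖ ≤ A * B := by
  refine norm_primitive_le_of_mem_Icc ⟨zero_le_one, le_rfl⟩ fun x hx => ?_
  rw [norm_mul]
  exact mul_le_mul (hf x hx) (hg x hx) (norm_nonneg _) ((norm_nonneg _).trans (hf x hx))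

lemma PrimitiveDecay.nonneg {α : ℕ} {f : ℝ → ℂ} {A : ℝ} (h : PrimitiveDecay α f A) : 0 ≤ A := by
  obtain ⟨ρ, _, _, bound⟩ := h
  exact (norm_nonneg _).trans (bound 0 ⟨le_rfl, zero_le_one⟩)

lemma integral_mul_eq_sub_integral_mul_primitive {u u' f : ℝ → ℂ} (hu : Continuous u)
    (hd : ∀ x, HasDerivWithinAt u (u' x) (Set.Ioi x) x) (hu' : IsRightIntegrand u')
    (hf : IsRightIntegrand f) (y : ℝ) :
    ∫ x in (0 : ℝ)..y, u x * f x =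
      u y * primitive f y - ∫ x in (0 : ℝ)..y, u' x * primitive f x := by
  rw [intervalIntegral.integral_mul_deriv_eq_deriv_mul_of_hasDeriv_right hu.continuousOn
    hf.continuous_primitive.continuousOn (fun x _ => hd x)
    (fun x _ => hf.hasDerivWithinAt_primitive x) (hu'.intervalIntegrable 0 y)
    (hf.intervalIntegrable 0 y), primitive_zero, mul_zero, sub_zero]

/-- Cauchy's formula for repeated integration. -/
lemma integral_sub_pow_mul (n : ℕ) {f : ℝ → ℂ} (hf : IsRightIntegrand f) (x : ℝ) :
    ∫ y in (0 : ℝ)..x, (((x - y) ^ n : ℝ) : ℂ) * f y =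
      (n.factorial : ℂ) * primitive^[n + 1] f x := by
  induction n generalizing f with
  | zero =>
    simp only [pow_zero, Complex.ofReal_one, one_mul, Nat.factorial_zero, Nat.cast_one, zero_add,
      Function.iterate_one, primitive]
  | succ n ih =>
    have hd (y : ℝ) : HasDerivAt (fun y : ℝ => (((x - y) ^ (n + 1) : ℝ) : ℂ))
        (((-(n + 1 : ℝ) * (x - y) ^ n : ℝ)) : ℂ) y := by
      refine HasDerivAt.ofReal_comp ((((hasDerivAt_id y).const_sub x).pow (n + 1)).congr_deriv ?_)
      simp only [id, Nat.add_sub_cancel, Nat.cast_succ]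
      ring
    rw [integral_mul_eq_sub_integral_mul_primitive (by fun_prop)
      (fun y => (hd y).hasDerivWithinAt) (.of_continuous (by fun_prop)) hf]
    simp only [Complex.ofReal_mul _ ((x - _) ^ n), mul_assoc, intervalIntegral.integral_const_mul,
      ih (.of_continuous hf.continuous_primitive), Function.iterate_succ_apply, Nat.factorial_succ]
    push_cast
    ring

lemma integral_max_sub_pow_mul {n : ℕ} (hn : n ≠ 0) {g : ℝ → ℂ} (hg : IsRightIntegrand g) {x : ℝ}
    (hx : x ∈ Set.Icc (0 : ℝ) 1) :
    ∫ y in (0 : ℝ)..1, ((max (x - y) 0 ^ n : ℝ) : ℂ) * g y =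
      (n.factorial : ℂ) * primitive^[n + 1] g x := by
  have hint (a c : ℝ) :
      IntervalIntegrable (fun y => ((max (x - y) 0 ^ n : ℝ) : ℂ) * g y) volume a c :=
    (hg.intervalIntegrable a c).continuousOn_mul (Continuous.continuousOn (by fun_prop))
  have integral_left : ∫ y in (0 : ℝ)..x, ((max (x - y) 0 ^ n : ℝ) : ℂ) * g y =
      ∫ y in (0 : ℝ)..x, (((x - y) ^ n : ℝ) : ℂ) * g y := by
    refine intervalIntegral.integral_congr fun y hy => ?_
    rw [Set.uIcc_of_le hx.1] at hy
    simp only [max_eq_left (sub_nonneg.2 hy.2)]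
  have integral_right : ∫ y in x..1, ((max (x - y) 0 ^ n : ℝ) : ℂ) * g y = 0 := by
    refine intervalIntegral.integral_zero_ae (ae_of_all _ fun y hy => ?_)
    rw [Set.uIoc_of_le hx.2] at hy
    rw [max_eq_right (sub_nonpos.2 hy.1.le), zero_pow hn, Complex.ofReal_zero, zero_mul]
  rw [← intervalIntegral.integral_add_adjacent_intervals (hint 0 x) (hint x 1), integral_left,
    integral_right, add_zero, integral_sub_pow_mul n hg]

lemma integral_polynomial_mul {ρ : ℕ} (P : Polynomial ℝ) {f : ℝ → ℂ} (hf : IsRightIntegrand f)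
    (h : ∀ i, 1 ≤ i → i ≤ ρ → primitive^[i] f 1 = 0) :
    ∫ x in (0 : ℝ)..1, ((P.eval x : ℝ) : ℂ) * f x = (-1) ^ ρ *
      ∫ x in (0 : ℝ)..1, (((Polynomial.derivative^[ρ] P).eval x : ℝ) : ℂ) * primitive^[ρ] f x := by
  induction ρ generalizing P f with
  | zero => rw [pow_zero, one_mul]; rfl
  | succ ρ ih =>
    have boundary : primitive f 1 = 0 := h 1 le_rfl (by omega)
    have hcont (Q : Polynomial ℝ) : Continuous fun x : ℝ => ((Q.eval x : ℝ) : ℂ) :=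
      Complex.continuous_ofReal.comp Q.continuous
    rw [integral_mul_eq_sub_integral_mul_primitive (hcont P)
      (fun x => (P.hasDerivAt x).ofReal_comp.hasDerivWithinAt)
      (.of_continuous (hcont P.derivative)) hf, boundary,
      ih P.derivative (.of_continuous hf.continuous_primitive)
        (fun i hi hi' => h (i + 1) (by omega) (by omega)),
      Function.iterate_succ_apply, Function.iterate_succ_apply]
    ring

/-- There are no boundary terms because the primitives of `f` vanish at both endpoints. -/
lemma integral_mul_primitive_iterate_add (r : ℕ) {ρ : ℕ} {f g : ℝ → ℂ} (hf : IsRightIntegrand f)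
    (hg : IsRightIntegrand g) (h : ∀ i, 1 ≤ i → i ≤ ρ → primitive^[i] f 1 = 0) :
    ∫ x in (0 : ℝ)..1, f x * primitive^[r + ρ] g x =
      (-1) ^ ρ * ∫ x in (0 : ℝ)..1, primitive^[ρ] f x * primitive^[r] g x := by
  induction ρ generalizing f with
  | zero => rw [pow_zero, one_mul]; rfl
  | succ ρ ih =>
    have boundary : primitive f 1 = 0 := h 1 le_rfl (by omega)
    have hg' := hg.iterate (r + ρ)
    simp only [← add_assoc, Function.iterate_succ_apply' primitive (r + ρ), mul_comm (f _)]
    rw [integral_mul_eq_sub_integral_mul_primitive hg'.continuous_primitive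
      hg'.hasDerivWithinAt_primitive hg' hf, boundary]
    simp only [mul_comm _ (primitive f _)]
    rw [ih (.of_continuous hf.continuous_primitive)
      (fun i hi hi' => h (i + 1) (by omega) (by omega)), Function.iterate_succ_apply]
    ring

lemma exists_norm_integral_polynomial_mul_le (α : ℕ) (P : Polynomial ℝ) :
    ∃ D : ℝ, 0 ≤ D ∧ ∀ (f : ℝ → ℂ) (A : ℝ), IsRightIntegrand f → PrimitiveDecay α f A →
      ‖∫ x in (0 : ℝ)..1, ((P.eval x : ℝ) : ℂ) * f x‖ ≤ D * A := by
  have hbounded (ρ : ℕ) : ∃ C : ℝ, ∀ x ∈ Set.Icc (0 : ℝ) 1,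
      ‖(((Polynomial.derivative^[ρ] P).eval x : ℝ) : ℂ)‖ ≤ C :=
    isCompact_Icc.exists_bound_of_continuousOn
      (Complex.continuous_ofReal.comp (Polynomial.continuous _)).continuousOn
  choose C hC using hbounded
  have hC0 (ρ : ℕ) : 0 ≤ C ρ := (norm_nonneg _).trans (hC ρ 0 ⟨le_rfl, zero_le_one⟩)
  refine ⟨∑ ρ ∈ Finset.range (α + 1), C ρ, Finset.sum_nonneg fun ρ _ => hC0 ρ, ?_⟩
  intro f A hf hdecay
  have hA := hdecay.nonneg
  obtain ⟨ρ, hρ, boundary, bound⟩ := hdecay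
  rw [integral_polynomial_mul P hf boundary, norm_mul, norm_pow, norm_neg, norm_one, one_pow,
    one_mul]
  refine (norm_integral_mul_le (hC ρ) bound).trans (mul_le_mul_of_nonneg_right ?_ hA)
  exact Finset.single_le_sum (fun i _ => hC0 i) (Finset.mem_range.2 (by omega))

/-- The bilinear form `∫₀¹ ∫₀¹ G(x, y) f(x) g(y) dy dx` of a kernel `G`. -/
noncomputable def kernelForm (G : ℝ → ℝ → ℝ) (f g : ℝ → ℂ) : ℂ :=
  ∫ x in (0 : ℝ)..1, f x * ∫ y in (0 : ℝ)..1, (G x y : ℂ) * g y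

/-- Continuous kernels whose bilinear form is `O(A B)` on functions with decay `A` and `B`. -/
structure IsDecayKernel (α : ℕ) (G : ℝ → ℝ → ℝ) : Prop where
  continuous : Continuous (Function.uncurry G)
  exists_bound : ∃ D : ℝ, 0 ≤ D ∧ ∀ (f g : ℝ → ℂ) (A B : ℝ), IsRightIntegrand f →
    IsRightIntegrand g → PrimitiveDecay α f A → PrimitiveDecay α g B →
      ‖kernelForm G f g‖ ≤ D * (A * B)

lemma intervalIntegrable_kernel_mul {G : ℝ → ℝ → ℝ} (hG : Continuous (Function.uncurry G))
    {g : ℝ → ℂ} {a c : ℝ} (hg : IntervalIntegrable g volume a c) (x : ℝ) :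
    IntervalIntegrable (fun y => (G x y : ℂ) * g y) volume a c :=
  hg.continuousOn_mul
    (Complex.continuous_ofReal.comp (hG.comp (Continuous.prodMk_right x))).continuousOn

lemma continuous_integral_kernel_mul {G : ℝ → ℝ → ℝ} (hG : Continuous (Function.uncurry G))
    {g : ℝ → ℂ} {a c : ℝ} (hg : IntervalIntegrable g volume a c) :
    Continuous fun x => ∫ y in a..c, (G x y : ℂ) * g y := by
  refine continuous_iff_continuousAt.2 fun x₀ => ?_
  obtain ⟨M, hM⟩ := ((isCompact_closedBall x₀ 1).prod isCompact_uIcc).exists_bound_of_continuousOn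
    (f := Function.uncurry G) (s := Metric.closedBall x₀ 1 ×ˢ Set.uIcc a c) hG.continuousOn
  refine intervalIntegral.continuousAt_of_dominated_interval (bound := fun y => M * ‖g y‖)
    (.of_forall fun x =>
      (intervalIntegrable_iff.1 (intervalIntegrable_kernel_mul hG hg x)).aestronglyMeasurable) ?_
    (hg.norm.const_mul M) (ae_of_all _ fun y _ => ?_)
  · filter_upwards [Metric.closedBall_mem_nhds x₀ one_pos] with x hx
    refine ae_of_all _ fun y hy => ?_
    rw [norm_mul, Complex.norm_real]
    exact mul_le_mul_of_nonneg_right (hM (x, y) ⟨hx, Set.uIoc_subset_uIcc hy⟩) (norm_nonneg _)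
  · exact (Complex.continuous_ofReal.comp
      (hG.comp (Continuous.prodMk_left y))).continuousAt.mul continuousAt_const

lemma kernelForm_add {G H : ℝ → ℝ → ℝ} (hG : Continuous (Function.uncurry G))
    (hH : Continuous (Function.uncurry H)) {f g : ℝ → ℂ} (hf : IntervalIntegrable f volume 0 1)
    (hg : IntervalIntegrable g volume 0 1) :
    kernelForm (fun x y => G x y + H x y) f g = kernelForm G f g + kernelForm H f g := by
  have outer {K : ℝ → ℝ → ℝ} (hK : Continuous (Function.uncurry K)) :
      IntervalIntegrable (fun x => f x * ∫ y in (0 : ℝ)..1, (K x y : ℂ) * g y) volume 0 1 :=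
    hf.mul_continuousOn (continuous_integral_kernel_mul hK hg).continuousOn
  simp only [kernelForm]
  rw [← intervalIntegral.integral_add (outer hG) (outer hH)]
  simp only [← mul_add, ← intervalIntegral.integral_add (intervalIntegrable_kernel_mul hG hg _)
    (intervalIntegrable_kernel_mul hH hg _), Complex.ofReal_add, add_mul]

lemma kernelForm_const_mul (c : ℝ) (G : ℝ → ℝ → ℝ) (f g : ℝ → ℂ) :
    kernelForm (fun x y => c * G x y) f g = c * kernelForm G f g := by
  simp only [kernelForm, Complex.ofReal_mul, mul_assoc, intervalIntegral.integral_const_mul,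
    mul_left_comm _ (c : ℂ)]

namespace IsDecayKernel

variable {α : ℕ} {G H : ℝ → ℝ → ℝ}

lemma add (hG : IsDecayKernel α G) (hH : IsDecayKernel α H) :
    IsDecayKernel α fun x y => G x y + H x y := by
  obtain ⟨hGc, D, hD, hGD⟩ := hG
  obtain ⟨hHc, E, hE, hHE⟩ := hH
  refine ⟨hGc.add hHc, D + E, add_nonneg hD hE, fun f g A B hf hg hA hB => ?_⟩
  rw [kernelForm_add hGc hHc (hf.intervalIntegrable 0 1) (hg.intervalIntegrable 0 1), add_mul]
  exact norm_add_le_of_le (hGD f g A B hf hg hA hB) (hHE f g A B hf hg hA hB)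

lemma const_mul (hG : IsDecayKernel α G) (c : ℝ) : IsDecayKernel α fun x y => c * G x y := by
  obtain ⟨hGc, D, hD, hGD⟩ := hG
  refine ⟨hGc.const_mul c, |c| * D, by positivity, fun f g A B hf hg hA hB => ?_⟩
  rw [kernelForm_const_mul, norm_mul, Complex.norm_real, Real.norm_eq_abs, mul_assoc]
  exact mul_le_mul_of_nonneg_left (hGD f g A B hf hg hA hB) (abs_nonneg c)

lemma zero (α : ℕ) : IsDecayKernel α fun _ _ => 0 :=
  ⟨continuous_const, 0, le_rfl, fun f g A B _ _ _ _ => by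
    simp only [kernelForm, Complex.ofReal_zero, zero_mul, mul_zero,
      intervalIntegral.integral_zero, norm_zero, le_refl]⟩

lemma sum {ι : Type*} {S : Finset ι} {G : ι → ℝ → ℝ → ℝ} (h : ∀ i ∈ S, IsDecayKernel α (G i)) :
    IsDecayKernel α fun x y => ∑ i ∈ S, G i x y := by
  induction S using Finset.cons_induction with
  | empty => simpa only [Finset.sum_empty] using zero α
  | cons i S hi ih =>
    simp only [Finset.sum_cons]
    exact (h i (Finset.mem_cons_self i S)).add
      (ih fun j hj => h j (Finset.mem_cons_of_mem hj))

lemma eval_mul_eval (α : ℕ) (P Q : Polynomial ℝ) :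
    IsDecayKernel α fun x y => P.eval x * Q.eval y := by
  have form_eq (f g : ℝ → ℂ) : kernelForm (fun x y => P.eval x * Q.eval y) f g =
      (∫ x in (0 : ℝ)..1, ((P.eval x : ℝ) : ℂ) * f x) *
        ∫ y in (0 : ℝ)..1, ((Q.eval y : ℝ) : ℂ) * g y := by
    simp only [kernelForm, Complex.ofReal_mul, mul_assoc, intervalIntegral.integral_const_mul]
    rw [← intervalIntegral.integral_mul_const]
    simp only [mul_left_comm, mul_assoc]
  obtain ⟨D, hD, hP⟩ := exists_norm_integral_polynomial_mul_le α P
  obtain ⟨E, hE, hQ⟩ := exists_norm_integral_polynomial_mul_le α Q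
  refine ⟨(P.continuous.comp continuous_fst).mul (Q.continuous.comp continuous_snd), D * E,
    mul_nonneg hD hE, fun f g A B hf hg hA hB => ?_⟩
  rw [form_eq, norm_mul, mul_mul_mul_comm]
  exact mul_le_mul (hP f A hf hA) (hQ g B hg hB) (norm_nonneg _) (mul_nonneg hD hA.nonneg)

lemma eval_sub (α : ℕ) (P : Polynomial ℝ) : IsDecayKernel α fun x y => P.eval (y - x) := by
  have expand : (fun x y : ℝ => P.eval (y - x)) = fun x y => ∑ n ∈ Finset.range (P.natDegree + 1),
      P.coeff n * ∑ m ∈ Finset.range (n + 1), (n.choose m : ℝ) *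
        (((-Polynomial.X : Polynomial ℝ) ^ (n - m)).eval x *
          ((Polynomial.X : Polynomial ℝ) ^ m).eval y) := by
    ext x y
    rw [Polynomial.eval_eq_sum_range]
    refine Finset.sum_congr rfl fun n _ => ?_
    simp only [sub_eq_add_neg, add_pow, Polynomial.eval_pow, Polynomial.eval_neg,
      Polynomial.eval_X]
    exact congrArg _ (Finset.sum_congr rfl fun m _ => by ring)
  rw [expand]
  exact sum fun n _ => (sum fun m _ => (eval_mul_eval α _ _).const_mul _).const_mul _

/-- Integration against the truncated power in the second variable is an iterated primitive of
order `2α`; up to `α` of the integrations are moved onto the other factor. -/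
lemma max_sub_pow (hα : 1 ≤ α) : IsDecayKernel α fun x y => max (x - y) 0 ^ (2 * α - 1) := by
  refine ⟨by fun_prop, (2 * α - 1).factorial, by positivity, fun f g A B hf hg hA hB => ?_⟩
  obtain ⟨ρ, hρ, boundary, bound_f⟩ := hA
  obtain ⟨σ, hσ, -, bound_g⟩ := hB
  have form_eq : kernelForm (fun x y => max (x - y) 0 ^ (2 * α - 1)) f g =
      ((2 * α - 1).factorial : ℂ) * ∫ x in (0 : ℝ)..1, f x * primitive^[(2 * α - ρ) + ρ] g x := by
    rw [← intervalIntegral.integral_const_mul]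
    refine intervalIntegral.integral_congr fun x hx => ?_
    rw [Set.uIcc_of_le zero_le_one] at hx
    simp only [integral_max_sub_pow_mul (by omega : 2 * α - 1 ≠ 0) hg hx,
      show 2 * α - ρ + ρ = 2 * α - 1 + 1 by omega, mul_left_comm]
  have bound_g' : ∀ x ∈ Set.Icc (0 : ℝ) 1, ‖primitive^[2 * α - ρ] g x‖ ≤ B := by
    rw [show 2 * α - ρ = (2 * α - ρ - σ) + σ by omega, Function.iterate_add]
    exact norm_primitive_iterate_le bound_g _
  rw [form_eq, integral_mul_primitive_iterate_add _ hf hg boundary, norm_mul, norm_mul, norm_pow,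
    norm_neg, norm_one, one_pow, one_mul, Complex.norm_natCast]
  exact mul_le_mul_of_nonneg_left (norm_integral_mul_le bound_f bound_g') (by positivity)

end IsDecayKernel

lemma bernoulliPoly_eq_eval (r : ℕ) (x : ℝ) :
    bernoulliPoly r x = ((Polynomial.bernoulli r).map (algebraMap ℚ ℝ)).eval x :=
  (Polynomial.eval_map_algebraMap _ _).symm

lemma bernoulliPoly_neg (n : ℕ) (t : ℝ) :
    bernoulliPoly (2 * n) (-t) = bernoulliPoly (2 * n) t + 2 * n * t ^ (2 * n - 1) := by
  have h := congrArg (Polynomial.aeval t) (Polynomial.bernoulli_comp_neg_X (2 * n))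
  have htwo : Polynomial.aeval t (2 : Polynomial ℚ) = (2 : ℝ) := map_ofNat _ 2
  simpa [bernoulliPoly, Polynomial.aeval_comp, htwo] using h

/-- The truncated power carries the only singularity of `B_{2n}(|x - y|)`, on the diagonal. -/
lemma bernoulliPoly_abs_sub {n : ℕ} (hn : 1 ≤ n) (x y : ℝ) : bernoulliPoly (2 * n) |x - y| =
    bernoulliPoly (2 * n) (y - x) + -(2 * n : ℝ) * max (x - y) 0 ^ (2 * n - 1) := by
  rcases le_total y x with h | h
  · rw [abs_of_nonneg (sub_nonneg.2 h), max_eq_left (sub_nonneg.2 h), ← neg_sub x y,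
      bernoulliPoly_neg]
    ring
  · rw [abs_of_nonpos (sub_nonpos.2 h), max_eq_right (sub_nonpos.2 h), zero_pow (by omega),
      neg_sub, mul_zero, add_zero]

lemma isDecayKernel_Kker {α : ℕ} (hα : 1 ≤ α) : IsDecayKernel α (Kker α) := by
  set P : ℕ → Polynomial ℝ := fun r => (Polynomial.bernoulli r).map (algebraMap ℚ ℝ)
  have expand : Kker α = fun x y => (∑ r ∈ Finset.range (α + 1),
      ((r.factorial : ℝ) ^ 2)⁻¹ * ((P r).eval x * (P r).eval y)) +
      ((-1 : ℝ) ^ (α + 1) / ((2 * α).factorial : ℝ)) * ((P (2 * α)).eval (y - x) +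
        -(2 * α : ℝ) * max (x - y) 0 ^ (2 * α - 1)) := by
    ext x y
    simp only [Kker, bernoulliPoly_abs_sub hα, bernoulliPoly_eq_eval, P, div_eq_inv_mul, mul_assoc]
  rw [expand]
  exact (IsDecayKernel.sum fun r _ => (IsDecayKernel.eval_mul_eval α _ _).const_mul _).add
    (((IsDecayKernel.eval_sub α _).add ((IsDecayKernel.max_sub_pow hα).const_mul _)).const_mul _)

/-- The weight `b^{-μ_α(k)}` that governs the size of the Walsh coefficients. -/
noncomputable def dickWeight (b α k : ℕ) : ℝ := ((b : ℝ) ^ dick b α k)⁻¹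

lemma dickWeight_nonneg (b α k : ℕ) : 0 ≤ dickWeight b α k := by
  rw [dickWeight]
  positivity

lemma Khat_eq_kernelForm (b α k l : ℕ) :
    Khat b α k l = kernelForm (Kker α) (fun x => (starRingEnd ℂ) (walsh b k x)) (walsh b l) := by
  simp only [Khat, kernelForm, integral_Ico_eq_integral_Ioc,
    intervalIntegral.integral_of_le zero_le_one, ← integral_const_mul, mul_left_comm, mul_assoc]

lemma exists_norm_Khat_le {b α : ℕ} (hb : 1 < b) (hα : 1 ≤ α) : ∃ D : ℝ, 0 ≤ D ∧
    ∀ k l : ℕ, ‖Khat b α k l‖ ≤ D * (dickWeight b α k * dickWeight b α l) := by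
  obtain ⟨D, hD, bound⟩ := (isDecayKernel_Kker hα).exists_bound
  refine ⟨D * ((b : ℝ) ^ α * (b : ℝ) ^ α), by positivity, fun k l => ?_⟩
  calc ‖Khat b α k l‖
      ≤ D * ((b : ℝ) ^ α / (b : ℝ) ^ dick b α k * ((b : ℝ) ^ α / (b : ℝ) ^ dick b α l)) := by
        rw [Khat_eq_kernelForm]
        exact bound _ _ _ _ (isRightIntegrand_walsh hb k).conj (isRightIntegrand_walsh hb l)
          (primitiveDecay_walsh hb α k).conj (primitiveDecay_walsh hb α l)
    _ = D * ((b : ℝ) ^ α * (b : ℝ) ^ α) * (dickWeight b α k * dickWeight b α l) := by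
        rw [dickWeight, dickWeight]
        ring

lemma KhatS_eq_prod (b α s : ℕ) (k l : Fin s → ℕ) :
    KhatS b α s k l = ∏ j, Khat b α (k j) (l j) := by
  have restrict_cube : (volume : Measure (Fin s → ℝ)).restrict
      (Set.univ.pi fun _ : Fin s => Set.Ico (0 : ℝ) 1) =
      Measure.pi fun _ : Fin s => (volume : Measure ℝ).restrict (Set.Ico (0 : ℝ) 1) := by
    rw [volume_pi, Measure.restrict_pi_pi]
  simp only [KhatS, Khat, restrict_cube, ← integral_fintype_prod_eq_prod (𝕜 := ℂ), walshVec,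
    map_prod, Finset.prod_mul_distrib, Complex.ofReal_prod]

lemma exists_norm_KhatS_le {b α : ℕ} (hb : 1 < b) (hα : 1 ≤ α) (s : ℕ) : ∃ D : ℝ, 0 ≤ D ∧
    ∀ k l : Fin s → ℕ,
      ‖KhatS b α s k l‖ ≤ D * ((∏ j, dickWeight b α (k j)) * ∏ j, dickWeight b α (l j)) := by
  obtain ⟨D, hD, bound⟩ := exists_norm_Khat_le hb hα
  refine ⟨D ^ s, by positivity, fun k l => ?_⟩
  rw [KhatS_eq_prod, norm_prod]
  calc ∏ j, ‖Khat b α (k j) (l j)‖ ≤ ∏ j, D * (dickWeight b α (k j) * dickWeight b α (l j)) :=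
        Finset.prod_le_prod (fun j _ => norm_nonneg _) (fun j _ => bound _ _)
    _ = D ^ s * ((∏ j, dickWeight b α (k j)) * ∏ j, dickWeight b α (l j)) := by
        rw [Finset.prod_mul_distrib, Finset.prod_mul_distrib, Finset.prod_const, Finset.card_univ,
          Fintype.card_fin]

/-! ### Linear independence of the rows of the generating matrices -/

section Hermite

open Polynomial

variable {K : Type*} [Field K]

lemma eval_hasseDeriv_X_sub_C_pow_mul (a : K) (e q : ℕ) (h : K[X]) :
    (hasseDeriv q ((X - C a) ^ e * h)).eval a =
      if e ≤ q then (taylor a h).coeff (q - e) else 0 := by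
  rw [← taylor_coeff, taylor_mul, taylor_pow, map_sub, taylor_X, taylor_C, add_sub_cancel_right,
    coeff_X_pow_mul']

lemma eval_hasseDeriv_eq_sum {f : K[X]} {M : ℕ} (hf : f.natDegree < M) (q : ℕ) (a : K) :
    (hasseDeriv q f).eval a =
      ∑ v : Fin M, (Nat.choose v.1 q : K) * a ^ (v.1 - q) * f.coeff v.1 := by
  rw [Fin.sum_univ_eq_sum_range (fun v => (Nat.choose v q : K) * a ^ (v - q) * f.coeff v) M,
    hasseDeriv_apply,
    sum_over_range' f (fun n => by rw [mul_zero, monomial_zero_right]) M hf, eval_finsetSum]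
  refine Finset.sum_congr rfl fun v _ => ?_
  rw [eval_monomial, mul_right_comm]

/-- The Hermite interpolation polynomial dual to the Hasse derivative of order `q₀` at `a t₀`. -/
lemma exists_isolating_polynomial {τ : Type*} [Fintype τ] {a : τ → K} (ha : Function.Injective a)
    {e : τ → ℕ} {t₀ : τ} {q₀ : ℕ} (hq₀ : q₀ < e t₀) :
    ∃ f : K[X], f.natDegree < ∑ t, e t ∧ (hasseDeriv q₀ f).eval (a t₀) ≠ 0 ∧
      (∀ q < q₀, (hasseDeriv q f).eval (a t₀) = 0) ∧
      ∀ t ≠ t₀, ∀ q < e t, (hasseDeriv q f).eval (a t) = 0 := by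
  classical
  let h : K[X] := ∏ t ∈ Finset.univ.erase t₀, (X - C (a t)) ^ e t
  have monic_pow (t : τ) (n : ℕ) : ((X - C (a t)) ^ n).Monic := (monic_X_sub_C _).pow _
  refine ⟨(X - C (a t₀)) ^ q₀ * h, ?_, ?_, fun q hq => ?_, fun t ht q hq => ?_⟩
  · have degree_eq : ((X - C (a t₀)) ^ q₀ * h).natDegree =
        q₀ + ∑ t ∈ Finset.univ.erase t₀, e t := by
      rw [(monic_pow t₀ q₀).natDegree_mul (monic_prod_of_monic _ _ fun t _ => monic_pow t _),
        natDegree_prod_of_monic _ _ fun t _ => monic_pow t _]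
      simp only [natDegree_pow, natDegree_X_sub_C, mul_one]
    rw [degree_eq, ← Finset.add_sum_erase Finset.univ e (Finset.mem_univ t₀)]
    exact Nat.add_lt_add_right hq₀ _
  · rw [eval_hasseDeriv_X_sub_C_pow_mul, if_pos le_rfl, Nat.sub_self, taylor_coeff_zero]
    simp only [h, eval_prod, eval_pow, eval_sub, eval_X, eval_C]
    exact Finset.prod_ne_zero_iff.2 fun t ht =>
      pow_ne_zero _ (sub_ne_zero.2 (ha.ne (Finset.ne_of_mem_erase ht).symm))
  · rw [eval_hasseDeriv_X_sub_C_pow_mul, if_neg (Nat.not_le.2 hq)]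
  · obtain ⟨f, hf⟩ : (X - C (a t)) ^ e t ∣ h :=
      Finset.dvd_prod_of_mem (fun t => (X - C (a t)) ^ e t)
        (Finset.mem_erase.2 ⟨ht, Finset.mem_univ t⟩)
    rw [hf, mul_left_comm, eval_hasseDeriv_X_sub_C_pow_mul, if_neg (Nat.not_le.2 hq)]

lemma eq_zero_of_sum_hasseDeriv_eq_zero {τ : Type*} [Fintype τ] {w M : ℕ} {a : τ → K}
    (ha : Function.Injective a) {e : τ → ℕ} (he : ∑ t, e t ≤ M) {c : τ → Fin w → K}
    (hc : ∀ t q, c t q ≠ 0 → q.1 < e t)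
    (h : ∀ f : K[X], f.natDegree < M →
      ∑ t, ∑ q, c t q * (hasseDeriv q.1 f).eval (a t) = 0) : c = 0 := by
  classical
  by_contra! hne
  obtain ⟨t₀, ht₀⟩ := Function.ne_iff.1 hne
  obtain ⟨q₁, hq₁⟩ := Function.ne_iff.1 ht₀
  obtain ⟨q₀, hq₀, hmax⟩ := Finset.exists_max_image (Finset.univ.filter fun q => c t₀ q ≠ 0) id
    ⟨q₁, Finset.mem_filter.2 ⟨Finset.mem_univ _, hq₁⟩⟩
  replace hq₀ := (Finset.mem_filter.1 hq₀).2
  obtain ⟨f, hdeg, hf₀, hlower, hother⟩ := exists_isolating_polynomial ha (hc t₀ q₀ hq₀)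
  have other_node (t : τ) (ht : t ≠ t₀) (q : Fin w) :
      c t q * (hasseDeriv q.1 f).eval (a t) = 0 := by
    by_cases hctq : c t q = 0
    · rw [hctq, zero_mul]
    · rw [hother t ht q (hc t q hctq), mul_zero]
  have other_order (q : Fin w) (hq : q ≠ q₀) : c t₀ q * (hasseDeriv q.1 f).eval (a t₀) = 0 := by
    by_cases hctq : c t₀ q = 0
    · rw [hctq, zero_mul]
    · have hlt : q < q₀ :=
        lt_of_le_of_ne (hmax q (Finset.mem_filter.2 ⟨Finset.mem_univ _, hctq⟩)) hq
      rw [hlower q hlt, mul_zero]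
  have relation := h f (hdeg.trans_le he)
  rw [Finset.sum_eq_single t₀ (fun t _ ht => Finset.sum_eq_zero fun q _ => other_node t ht q)
    (fun ht => absurd (Finset.mem_univ _) ht),
    Finset.sum_eq_single q₀ (fun q _ hq => other_order q hq)
    (fun hq => absurd (Finset.mem_univ _) hq)] at relation
  exact mul_ne_zero hq₀ hf₀ relation

end Hermite

/-- Generating matrices of a digital `(0, m, t)`-net: any leading rows, at most `m` in total, are
linearly independent. `H i` is the number of leading rows taken from the `i`-th matrix. -/
def IsZeroNet {K : Type*} [Field K] {t n m : ℕ} (C : Fin t → Matrix (Fin n) (Fin m) K) : Prop :=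
  ∀ (H : Fin t → ℕ) (x : Fin t → Fin n → K), ∑ i, H i ≤ m →
    (∀ i r, x i r ≠ 0 → r.1 < H i) → ∑ i, (C i).transpose.mulVec (x i) = 0 → x = 0

lemma sum_min_sub_mul_le (w H g : ℕ) : ∑ l : Fin g, min w (H - l.1 * w) ≤ H := by
  suffices h : ∑ l ∈ Finset.range g, min w (H - l * w) ≤ min H (g * w) by
    rw [Fin.sum_univ_eq_sum_range (fun l => min w (H - l * w))]
    exact h.trans (min_le_left _ _)
  induction g with
  | zero => exact Nat.zero_le _
  | succ g ih =>
    rw [Finset.sum_range_succ, Nat.succ_mul]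
    omega

/-- Pairing a row of a Chen–Skriganov matrix with the coefficient vector of a polynomial evaluates
a Hasse derivative of that polynomial at the node of the row. -/
lemma isZeroNet_csMatrix {b t g w : ℕ} [Fact b.Prime] {node : Fin t → ℕ → ZMod b}
    (hnode : Function.Injective fun p : Fin t × Fin g => node p.1 p.2) :
    IsZeroNet fun i => csMatrix b w (g * w) (node i) := by
  intro H x hH hx h0
  have pairing (f : Polynomial (ZMod b)) (hf : f.natDegree < g * w) :
      ∑ p : Fin t × Fin g, ∑ q : Fin w, x p.1 (finProdFinEquiv (p.2, q)) *
        (Polynomial.hasseDeriv q.1 f).eval (node p.1 p.2) = 0 := by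
    have row (i : Fin t) (l : Fin g) (q : Fin w) (v : Fin (g * w)) :
        csMatrix b w (g * w) (node i) (finProdFinEquiv (l, q)) v =
          (Nat.choose v.1 q.1 : ZMod b) * node i l ^ (v.1 - q.1) := by
      simp only [csMatrix, Matrix.of_apply, finProdFinEquiv_apply_val, Nat.add_mul_mod_self_left,
        Nat.mod_eq_of_lt q.2, Nat.add_mul_div_left _ _ q.pos, Nat.div_eq_of_lt q.2, zero_add]
    let coeffs : Fin (g * w) → ZMod b := fun v => f.coeff v.1
    calc ∑ p : Fin t × Fin g, ∑ q : Fin w, x p.1 (finProdFinEquiv (p.2, q)) *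
          (Polynomial.hasseDeriv q.1 f).eval (node p.1 p.2)
        = ∑ i, x i ⬝ᵥ (csMatrix b w (g * w) (node i)).mulVec coeffs := by
          simp only [Fintype.sum_prod_type, dotProduct, Matrix.mulVec,
            ← (finProdFinEquiv (m := g) (n := w)).sum_comp, row, eval_hasseDeriv_eq_sum hf, coeffs]
      _ = (∑ i, (csMatrix b w (g * w) (node i)).transpose.mulVec (x i)) ⬝ᵥ coeffs := by
          simp only [Matrix.dotProduct_mulVec, Matrix.mulVec_transpose, sum_dotProduct]
      _ = 0 := by rw [h0, zero_dotProduct]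
  have sum_order_le : ∑ p : Fin t × Fin g, min w (H p.1 - p.2.1 * w) ≤ g * w := by
    rw [Fintype.sum_prod_type]
    exact (Finset.sum_le_sum fun i _ => sum_min_sub_mul_le w (H i) g).trans hH
  have order_bound (p : Fin t × Fin g) (q : Fin w)
      (hpq : x p.1 (finProdFinEquiv (p.2, q)) ≠ 0) : q.1 < min w (H p.1 - p.2.1 * w) := by
    have hlt := hx p.1 _ hpq
    rw [finProdFinEquiv_apply_val, mul_comm] at hlt
    exact lt_min q.2 (Nat.lt_sub_of_add_lt hlt)
  have coeff_eq_zero := eq_zero_of_sum_hasseDeriv_eq_zero hnode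
    sum_order_le order_bound pairing
  ext i u
  obtain ⟨⟨l, q⟩, rfl⟩ := finProdFinEquiv.surjective u
  exact congrFun (congrFun coeff_eq_zero (i, l)) q

/-- The position `β h + i` of the `h`-th row of the `i`-th of `β` interlaced matrices. -/
def interlaceEquiv (β n : ℕ) : Fin n × Fin β ≃ Fin (β * n) :=
  finProdFinEquiv.trans (finCongr (Nat.mul_comm n β))

lemma interlaceEquiv_val (β n : ℕ) (h : Fin n) (i : Fin β) :
    (interlaceEquiv β n (h, i)).1 = β * h.1 + i.1 :=
  Nat.add_comm _ _

lemma interlace_interlaceEquiv {R : Type*} {β s m : ℕ} (C : Fin (β * s) → Matrix (Fin m) (Fin m) R)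
    (j : Fin s) (h : Fin m) (i : Fin β) :
    interlace β s m C j (interlaceEquiv β m (h, i)) = C (interlaceEquiv β s (j, i)) h := by
  ext v
  simp only [interlace, Matrix.of_apply, interlaceEquiv_val]
  congr 2
  · rw [Nat.mul_add_mod, Nat.mod_eq_of_lt i.2]
    exact Nat.add_comm _ _
  · exact (Nat.mul_add_div i.pos _ _).trans (by rw [Nat.div_eq_of_lt i.2, add_zero])

lemma IsZeroNet.eq_zero_of_interlace {K : Type*} [Field K] {β s m : ℕ}
    {C : Fin (β * s) → Matrix (Fin m) (Fin m) K} (hC : IsZeroNet C) {H : Fin s → Fin β → ℕ}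
    (hH : ∑ j, ∑ i, H j i ≤ m) {y : Fin s → Fin (β * m) → K}
    (hy : ∀ j h i, y j (interlaceEquiv β m (h, i)) ≠ 0 → h.1 < H j i)
    (h0 : ∑ j, (interlace β s m C j).transpose.mulVec (y j) = 0) : y = 0 := by
  set e := interlaceEquiv β s
  have key := hC (fun t => H (e.symm t).1 (e.symm t).2)
    (fun t h => y (e.symm t).1 (interlaceEquiv β m (h, (e.symm t).2)))
    (by simpa only [← e.sum_comp, Equiv.symm_apply_apply, Fintype.sum_prod_type] using hH)
    (fun t h => hy _ _ _)
    (by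
      rw [← h0]
      ext v
      simp only [← e.sum_comp, Equiv.symm_apply_apply, Fintype.sum_prod_type, Finset.sum_apply,
        Matrix.mulVec, dotProduct, Matrix.transpose_apply,
        ← (interlaceEquiv β m).sum_comp, interlace_interlaceEquiv]
      exact Finset.sum_congr rfl fun j _ => Finset.sum_comm)
  ext j r
  obtain ⟨⟨h, i⟩, rfl⟩ := (interlaceEquiv β m).surjective r
  simpa only [Equiv.symm_apply_apply, Pi.zero_apply] using congrFun (congrFun key (e (j, i))) h

/-! ### The dual net of an interlaced zero net -/

lemma eq_of_trv_eq_of_div_eq {b n k l : ℕ} (hb : 1 < b) (h : trv b n k = trv b n l)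
    (h' : k / b ^ n = l / b ^ n) : k = l := by
  refine eq_of_bdigit_eq hb fun i => ?_
  rcases lt_or_ge i n with hi | hi
  · have hmod : (bdigit b k i : ZMod b) = bdigit b l i := congrFun h ⟨i, hi⟩
    exact ((ZMod.natCast_eq_natCast_iff _ _ _).1 hmod).eq_of_lt_of_lt
      (Nat.mod_lt _ (by omega)) (Nat.mod_lt _ (by omega))
  · obtain ⟨d, rfl⟩ := Nat.exists_eq_add_of_le hi
    simp only [bdigit, pow_add, ← Nat.div_div_eq_div_mul, h']

/-- Water-filling: the `α` leading digits contribute `α θ` plus their excesses over `θ`, and the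
other digits have no excess. -/
lemma exists_mul_add_sum_excess_le_dick {b : ℕ} (hb : 1 < b) (α : ℕ) {k n : ℕ} (hk : k < b ^ n) :
    ∃ θ ≤ n, α * θ + ∑ p ∈ bsupp b k, (p + 1 - θ) ≤ dick b α k := by
  induction α generalizing k n with
  | zero =>
    refine ⟨n, le_rfl, ?_⟩
    rw [dick_zero_left, zero_mul, zero_add,
      Finset.sum_eq_zero fun p hp => Nat.sub_eq_zero_of_le (lt_of_mem_bsupp hb hk hp)]
  | succ α ih =>
    obtain rfl | ⟨m, c, r, hc0, hc, hr, rfl⟩ := eq_zero_or_leading hb k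
    · exact ⟨0, Nat.zero_le _, by simp [bsupp_zero]⟩
    · obtain ⟨θ, hθ, hle⟩ := ih hr
      have hmn := lt_of_leading_lt_pow hb hc0 hk
      have hm : m ∉ bsupp b r := fun hm => lt_irrefl _ (lt_of_mem_bsupp hb hr hm)
      refine ⟨θ, by omega, ?_⟩
      rw [dick_leading α hb hc0 hc hr, bsupp_leading hb hc0 hc hr, Finset.sum_insert hm,
        Nat.succ_mul]
      omega

/-- The number of rows of the `i`-th of `β` interlaced matrices up to the last one selected by the
digits of `k`, that is, one plus the largest `p / β` over the positions `p ≡ i` modulo `β` of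
nonzero digits of `k` (and `0` if there are none). -/
def residueHeight (b β k i : ℕ) : ℕ := ((bsupp b k).filter (· % β = i)).sup (· / β + 1)

lemma div_lt_residueHeight {b k p : ℕ} (β : ℕ) (hp : p ∈ bsupp b k) :
    p / β < residueHeight b β k (p % β) :=
  Finset.le_sup (f := (· / β + 1)) (Finset.mem_filter.2 ⟨hp, rfl⟩)

lemma mul_residueHeight_sub_le (b k i θ : ℕ) {β : ℕ} :
    β * residueHeight b β k i - (β + θ) ≤ ∑ p ∈ bsupp b k with p % β = i, (p + 1 - θ) := by
  rw [residueHeight]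
  obtain hempty | hne := ((bsupp b k).filter (· % β = i)).eq_empty_or_nonempty
  · simp only [hempty, Finset.sup_empty, bot_eq_zero', mul_zero, zero_tsub, zero_le]
  · obtain ⟨p, hp, hsup⟩ := Finset.exists_mem_eq_sup _ hne (· / β + 1)
    have hdiv := Nat.mul_div_le p β
    refine le_trans ?_ (Finset.single_le_sum (f := fun p => p + 1 - θ)
      (fun _ _ => Nat.zero_le _) hp)
    rw [hsup, Nat.mul_succ]
    omega

lemma mul_sum_residueHeight_le {b α β : ℕ} (hb : 1 < b) (hβ : 0 < β) (hαβ : α ≤ β) (k : ℕ) :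
    α * ∑ i : Fin β, residueHeight b β k i ≤ dick b α k + α * β := by
  obtain ⟨θ, -, hθ⟩ := exists_mul_add_sum_excess_le_dick hb α (Nat.lt_pow_self hb (n := k))
  set excess := ∑ p ∈ bsupp b k, (p + 1 - θ) with hexcess
  have excess_ge : ∑ i : Fin β, (β * residueHeight b β k i - (β + θ)) ≤ excess := by
    rw [hexcess, ← Finset.sum_fiberwise_of_maps_to (t := Finset.range β) (g := (· % β))
      (fun p _ => Finset.mem_range.2 (Nat.mod_lt p hβ)), ← Fin.sum_univ_eq_sum_range
      (fun i => ∑ p ∈ bsupp b k with p % β = i, (p + 1 - θ))]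
    exact Finset.sum_le_sum fun i _ => mul_residueHeight_sub_le b k i θ
  have heights_le : β * ∑ i : Fin β, residueHeight b β k i ≤ β * (β + θ) + excess :=
    calc β * ∑ i : Fin β, residueHeight b β k i
        ≤ ∑ i : Fin β, ((β + θ) + (β * residueHeight b β k i - (β + θ))) := by
          rw [Finset.mul_sum]
          exact Finset.sum_le_sum fun i _ => le_add_tsub
      _ = β * (β + θ) + ∑ i : Fin β, (β * residueHeight b β k i - (β + θ)) := by
          rw [Finset.sum_add_distrib, Finset.sum_const, Finset.card_univ, Fintype.card_fin,
            smul_eq_mul]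
      _ ≤ β * (β + θ) + excess := Nat.add_le_add_left excess_ge _
  refine Nat.le_of_mul_le_mul_left ?_ hβ
  calc β * (α * ∑ i : Fin β, residueHeight b β k i)
      ≤ α * (β * (β + θ) + excess) := by
        rw [mul_left_comm]
        exact Nat.mul_le_mul_left α heights_le
    _ ≤ β * (α * θ + excess) + β * (α * β) := by
        have := Nat.mul_le_mul_right excess hαβ
        linarith
    _ ≤ β * (dick b α k + α * β) := by
        rw [← mul_add]
        exact Nat.mul_le_mul_left β (Nat.add_le_add_right hθ _)

lemma sum_card_filter_mod_eq {β : ℕ} (hβ : 0 < β) (n : ℕ) :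
    ∑ i : Fin β, ((Finset.range n).filter (· % β = i.1)).card = n := by
  rw [Fin.sum_univ_eq_sum_range (fun i => ((Finset.range n).filter (· % β = i)).card),
    ← Finset.card_eq_sum_card_fiberwise
      fun p _ => Finset.mem_coe.2 (Finset.mem_range.2 (Nat.mod_lt p hβ)), Finset.card_range]

lemma lt_card_filter_mod_eq {β n h i : ℕ} (hi : i < β) (hn : β * h + i < n) :
    h < ((Finset.range n).filter (· % β = i)).card := by
  rw [← Nat.succ_le_iff, ← Finset.card_range h.succ]
  refine Finset.card_le_card_of_injOn (fun h => β * h + i) (fun h' hh' => ?_)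
    fun h₁ _ h₂ _ heq => Nat.eq_of_mul_eq_mul_left (by omega) (Nat.add_right_cancel heq)
  have hle := Nat.mul_le_mul_left β (Nat.lt_succ_iff.1 (Finset.mem_range.1 (Finset.mem_coe.1 hh')))
  refine Finset.mem_coe.2 (Finset.mem_filter.2 ⟨Finset.mem_range.2 ?_, ?_⟩)
  · exact (Nat.add_le_add_right hle i).trans_lt hn
  · rw [Nat.mul_add_mod, Nat.mod_eq_of_lt hi]

lemma exists_le_sum_eq {ι : Type*} [Fintype ι] (F : ι → ℕ) {M : ℕ} (hM : M ≤ ∑ j, F j) :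
    ∃ f ≤ F, ∑ j, f j = M := by
  classical
  induction M with
  | zero => exact ⟨0, fun _ => Nat.zero_le _, Finset.sum_const_zero⟩
  | succ M ih =>
    obtain ⟨f, hfF, hf⟩ := ih (by omega)
    obtain ⟨j, -, hj⟩ := Finset.exists_lt_of_sum_lt (s := Finset.univ) (f := f) (g := F) (by omega)
    refine ⟨f + Pi.single j 1, fun i => ?_, ?_⟩
    · rcases eq_or_ne i j with rfl | hij
      · rw [Pi.add_apply, Pi.single_eq_same]
        exact hj
      · rw [Pi.add_apply, Pi.single_eq_of_ne hij, add_zero]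
        exact hfF i
    · simp only [Pi.add_apply, Finset.sum_add_distrib, hf, Finset.sum_pi_single', Finset.mem_univ,
        if_true]

namespace IsZeroNet

variable {b β s m : ℕ} [Fact b.Prime] {C : Fin (β * s) → Matrix (Fin m) (Fin m) (ZMod b)}

lemma exists_lt_sum_residueHeight (hC : IsZeroNet C) {l : Fin s → ℕ}
    (hl : l ∈ dualNet b (interlace β s m C)) (hl0 : l ≠ 0) :
    m < ∑ j, ∑ i : Fin β, residueHeight b β (l j) i := by
  have hb : 1 < b := (Fact.out : b.Prime).one_lt
  by_contra! hle
  refine hl0 (funext fun j => ?_)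
  have digits_eq_zero := hC.eq_zero_of_interlace hle (fun j h i hne => ?_) hl.2
  · refine eq_of_trv_eq_of_div_eq hb ((congrFun digits_eq_zero j).trans ?_)
      ((Nat.div_eq_of_lt (hl.1 j)).trans (Nat.zero_div _).symm)
    ext i
    rw [trv, Pi.zero_apply, Pi.zero_apply, Pi.zero_apply, bdigit_zero, Nat.cast_zero]
  · have hmem : β * h.1 + i.1 ∈ bsupp b (l j) := by
      rw [mem_bsupp hb, ← interlaceEquiv_val β m h i]
      exact fun hzero => hne (by rw [trv, hzero, Nat.cast_zero])
    have hlt := div_lt_residueHeight β hmem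
    rwa [Nat.mul_add_div i.pos, Nat.mul_add_mod, Nat.mod_eq_of_lt i.2, Nat.div_eq_of_lt i.2,
      add_zero] at hlt

lemma mul_le_dickVec_add (hC : IsZeroNet C) {α : ℕ} (hα : 0 < α) (hαβ : α ≤ β) {l : Fin s → ℕ}
    (hl : l ∈ dualNetInf b (interlace β s m C)) (hl0 : l ≠ 0) :
    α * m ≤ dickVec b α l + s * (α * β) := by
  have hb : 1 < b := (Fact.out : b.Prime).one_lt
  by_cases hbox : ∀ j, l j < b ^ (β * m)
  · calc α * m ≤ α * ∑ j, ∑ i : Fin β, residueHeight b β (l j) i :=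
          Nat.mul_le_mul_left α (hC.exists_lt_sum_residueHeight ⟨hbox, hl⟩ hl0).le
      _ ≤ ∑ j, (dick b α (l j) + α * β) := by
          rw [Finset.mul_sum]
          exact Finset.sum_le_sum fun j _ =>
            mul_sum_residueHeight_le hb (hα.trans_le hαβ) hαβ (l j)
      _ = dickVec b α l + s * (α * β) := by
          rw [Finset.sum_add_distrib, Finset.sum_const, Finset.card_univ, Fintype.card_fin,
            smul_eq_mul, dickVec]
  · push Not at hbox
    obtain ⟨j, hj⟩ := hbox
    have hdick := (le_dick_of_pow_le hb hα hj).trans (dick_le_dickVec b α l j)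
    have := Nat.mul_le_mul_right m hαβ
    omega

lemma eq_of_mem_dualNetInf (hC : IsZeroNet C) {f : Fin s → ℕ} (hf : ∑ j, f j ≤ m)
    (hβ : 0 < β) {k l : Fin s → ℕ} (hk : k ∈ dualNetInf b (interlace β s m C))
    (hl : l ∈ dualNetInf b (interlace β s m C)) (hkl : ∀ j, k j / b ^ f j = l j / b ^ f j) :
    k = l := by
  have hb : 1 < b := (Fact.out : b.Prime).one_lt
  have high_div_eq (j : Fin s) {i : ℕ} (hi : f j ≤ i) : k j / b ^ i = l j / b ^ i := by
    obtain ⟨d, rfl⟩ := Nat.exists_eq_add_of_le hi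
    rw [pow_add, ← Nat.div_div_eq_div_mul, ← Nat.div_div_eq_div_mul, hkl j]
  have diff_eq_zero := hC.eq_zero_of_interlace
    (y := fun j => trv b (β * m) (k j) - trv b (β * m) (l j))
    (H := fun j i => ((Finset.range (f j)).filter (· % β = i.1)).card)
    (by simpa only [sum_card_filter_mod_eq hβ] using hf)
    (fun j h i hne => lt_card_filter_mod_eq i.2 (by
      by_contra! hle
      rw [← interlaceEquiv_val β m] at hle
      exact hne (by rw [Pi.sub_apply, trv, trv, bdigit, bdigit, high_div_eq j hle, sub_self])))
    (by
      simp only [Matrix.mulVec_sub, Finset.sum_sub_distrib]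
      rw [show _ = _ from hk, show _ = _ from hl, sub_self])
  refine funext fun j => eq_of_trv_eq_of_div_eq hb (sub_eq_zero.1 (congrFun diff_eq_zero j))
    (high_div_eq j ?_)
  exact (Finset.single_le_sum (fun _ _ => Nat.zero_le _) (Finset.mem_univ j)).trans
    (hf.trans (Nat.le_mul_of_pos_left _ hβ))

lemma card_le_of_div_eq (hC : IsZeroNet C) (hβ : 0 < β) (F q : Fin s → ℕ)
    {E : Finset (Fin s → ℕ)} (hE : ∀ l ∈ E, l ∈ dualNetInf b (interlace β s m C))
    (hq : ∀ l ∈ E, ∀ j, l j / b ^ F j = q j) : E.card ≤ b ^ (∑ j, F j - m) := by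
  classical
  have hb : 1 < b := (Fact.out : b.Prime).one_lt
  obtain ⟨f, hfF, hf⟩ := exists_le_sum_eq F (min_le_right m (∑ j, F j))
  let box := Fintype.piFinset fun j =>
    Finset.Ico (q j * b ^ (F j - f j)) ((q j + 1) * b ^ (F j - f j))
  have card_box : box.card = b ^ (∑ j, F j - m) := by
    rw [← tsub_min, min_comm, ← hf, ← Finset.sum_tsub_distrib _ fun j _ => hfF j,
      ← Finset.prod_pow_eq_pow_sum, Fintype.card_piFinset]
    refine Finset.prod_congr rfl fun j _ => ?_
    rw [Nat.card_Ico, ← Nat.sub_mul, Nat.add_sub_cancel_left, one_mul]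
  rw [← card_box]
  refine Finset.card_le_card_of_injOn (fun l j => l j / b ^ f j) (fun l hl => ?_)
    fun k hk l hl heq => hC.eq_of_mem_dualNetInf (hf.trans_le (min_le_left _ _)) hβ (hE k hk)
      (hE l hl) fun j => congrFun heq j
  refine Finset.mem_coe.2 (Fintype.mem_piFinset.2 fun j => Finset.mem_Ico.2 ?_)
  have hdiv : l j / b ^ f j / b ^ (F j - f j) = q j := by
    rw [Nat.div_div_eq_div_mul, ← pow_add, Nat.add_sub_cancel' (hfF j), hq l hl j]
  have hpos : 0 < b ^ (F j - f j) := by positivity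
  rw [← Nat.le_div_iff_mul_le hpos, ← Nat.div_lt_iff_lt_mul hpos, hdiv]
  exact ⟨le_rfl, Nat.lt_succ_self _⟩

end IsZeroNet

/-! ### Sums of the weights over all frequencies -/

/-- The sum of `b ^ (-μ_α(k))` over the frequencies `k < b ^ n`. -/
noncomputable def dickWeightSum (b α n : ℕ) : ℝ := ∑ k ∈ Finset.range (b ^ n), dickWeight b α k

section DickWeightSum

variable {b : ℕ} (α n : ℕ)

lemma sum_range_mul_eq_sum_sum {M : Type*} [AddCommMonoid M] (f : ℕ → M) (c m : ℕ) :
    ∑ k ∈ Finset.range (c * m), f k =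
      ∑ d ∈ Finset.range c, ∑ k ∈ Finset.range m, f (d * m + k) := by
  induction c with
  | zero => simp only [zero_mul, Finset.range_zero, Finset.sum_empty]
  | succ c ih => rw [Nat.succ_mul, Finset.sum_range_add, ih, Finset.sum_range_succ]

lemma dickWeightSum_nonneg (b : ℕ) : 0 ≤ dickWeightSum b α n :=
  Finset.sum_nonneg fun _ _ => dickWeight_nonneg _ _ _

lemma dickWeightSum_zero_left (b : ℕ) : dickWeightSum b 0 n = (b : ℝ) ^ n := by
  simp only [dickWeightSum, dickWeight, dick_zero_left, pow_zero, inv_one, Finset.sum_const,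
    Finset.card_range, nsmul_eq_mul, Nat.cast_pow, mul_one]

lemma dickWeightSum_zero_right (b : ℕ) : dickWeightSum b α 0 = 1 := by
  simp only [dickWeightSum, dickWeight, pow_zero, Finset.range_one, Finset.sum_singleton,
    dick_zero_right, inv_one]

lemma dickWeightSum_mono (hb : 1 < b) : Monotone (dickWeightSum b α) := fun _ _ h =>
  Finset.sum_le_sum_of_subset_of_nonneg
    (Finset.range_mono (Nat.pow_le_pow_right hb.le h)) fun _ _ _ => dickWeight_nonneg _ _ _

lemma dickWeight_leading {n c r : ℕ} (hb : 1 < b) (hc0 : 0 < c) (hc : c < b) (hr : r < b ^ n) :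
    dickWeight b (α + 1) (c * b ^ n + r) = ((b : ℝ) ^ (n + 1))⁻¹ * dickWeight b α r := by
  rw [dickWeight, dickWeight, dick_leading α hb hc0 hc hr, pow_add, mul_inv]

lemma dickWeightSum_succ (hb : 1 < b) : dickWeightSum b (α + 1) (n + 1) =
    dickWeightSum b (α + 1) n +
      (((b : ℝ) ^ n)⁻¹ - ((b : ℝ) ^ (n + 1))⁻¹) * dickWeightSum b α n := by
  obtain ⟨c, rfl⟩ : ∃ c, b = c + 1 := ⟨b - 1, by omega⟩
  have block : ∀ d ∈ Finset.range c, ∑ k ∈ Finset.range ((c + 1) ^ n),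
      dickWeight (c + 1) (α + 1) ((d + 1) * (c + 1) ^ n + k) =
        (((c + 1 : ℕ) : ℝ) ^ (n + 1))⁻¹ * dickWeightSum (c + 1) α n := fun d hd => by
    rw [dickWeightSum, Finset.mul_sum]
    refine Finset.sum_congr rfl fun k hk => ?_
    exact dickWeight_leading α hb d.succ_pos (Nat.succ_lt_succ (Finset.mem_range.1 hd))
      (Finset.mem_range.1 hk)
  have card_eq : (c : ℝ) * (((c + 1 : ℕ) : ℝ) ^ (n + 1))⁻¹ =
      (((c + 1 : ℕ) : ℝ) ^ n)⁻¹ - (((c + 1 : ℕ) : ℝ) ^ (n + 1))⁻¹ := by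
    field_simp
    push_cast
    ring
  rw [dickWeightSum, pow_succ', sum_range_mul_eq_sum_sum, Finset.sum_range_succ',
    Finset.sum_congr rfl block, Finset.sum_const, Finset.card_range, nsmul_eq_mul, ← mul_assoc,
    card_eq, add_comm]
  simp only [zero_mul, zero_add, dickWeightSum]

lemma dickWeightSum_add_le {C : ℝ} {α : ℕ} (hb : 1 < b) (hC : ∀ n, dickWeightSum b α n ≤ C)
    (A d : ℕ) : dickWeightSum b (α + 1) (A + d) ≤ dickWeightSum b (α + 1) A +
      C * (((b : ℝ) ^ A)⁻¹ - ((b : ℝ) ^ (A + d))⁻¹) := by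
  induction d with
  | zero => simp only [add_zero, sub_self, mul_zero, le_refl]
  | succ d ih =>
    have inv_le : ((b : ℝ) ^ (A + d + 1))⁻¹ ≤ ((b : ℝ) ^ (A + d))⁻¹ :=
      inv_anti₀ (by positivity) (pow_le_pow_right₀ (by exact_mod_cast hb.le) (Nat.le_succ _))
    have step := mul_le_mul_of_nonneg_left (hC (A + d)) (sub_nonneg.2 inv_le)
    rw [← Nat.add_assoc, dickWeightSum_succ _ _ hb]
    linarith

lemma dickWeightSum_one_le (hb : 1 < b) : dickWeightSum b 1 n ≤ 1 + n := by
  induction n with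
  | zero => simp only [dickWeightSum_zero_right, Nat.cast_zero, add_zero, le_refl]
  | succ n ih =>
    have : 0 ≤ ((b : ℝ) ^ (n + 1))⁻¹ * (b : ℝ) ^ n := by positivity
    rw [dickWeightSum_succ 0 n hb, dickWeightSum_zero_left, sub_mul,
      inv_mul_cancel₀ (by positivity)]
    push_cast
    linarith

lemma dickWeightSum_two_le (hb : 1 < b) : dickWeightSum b 2 n ≤ 5 - (2 * n + 4) / 2 ^ n := by
  induction n with
  | zero =>
    rw [dickWeightSum_zero_right]
    norm_num
  | succ n ih =>
    have inv_sub_le : ((b : ℝ) ^ n)⁻¹ - ((b : ℝ) ^ (n + 1))⁻¹ ≤ ((2 : ℝ) ^ n)⁻¹ :=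
      (sub_le_self _ (by positivity)).trans
        (inv_anti₀ (by positivity) (pow_le_pow_left₀ (by norm_num) (by exact_mod_cast hb) n))
    rw [dickWeightSum_succ 1 n hb]
    calc _ ≤ (5 - (2 * n + 4) / 2 ^ n : ℝ) + ((2 : ℝ) ^ n)⁻¹ * (1 + n) :=
          add_le_add ih (mul_le_mul inv_sub_le (dickWeightSum_one_le n hb)
            (dickWeightSum_nonneg _ _ _) (by positivity))
      _ = _ := by
          push_cast
          field_simp
          ring

lemma exists_dickWeightSum_le (hb : 1 < b) : ∃ C, ∀ n, dickWeightSum b (α + 2) n ≤ C := by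
  induction α with
  | zero =>
    exact ⟨5, fun n => (dickWeightSum_two_le n hb).trans (sub_le_self _ (by positivity))⟩
  | succ α ih =>
    obtain ⟨C, hC⟩ := ih
    have hC0 : 0 ≤ C := (dickWeightSum_nonneg _ _ _).trans (hC 0)
    refine ⟨1 + C, fun n => ?_⟩
    calc dickWeightSum b (α + 2 + 1) n
        ≤ 1 + C * (1 - ((b : ℝ) ^ n)⁻¹) := by
          simpa only [zero_add, dickWeightSum_zero_right, pow_zero, inv_one]
            using dickWeightSum_add_le hb hC 0 n
      _ ≤ 1 + C := by
          gcongr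
          exact mul_le_of_le_one_right hC0 (sub_le_self _ (by positivity))

end DickWeightSum

/-- The box `{0, …, b ^ n - 1} ^ s` of frequency vectors. -/
def digitBox (b s n : ℕ) : Finset (Fin s → ℕ) := Fintype.piFinset fun _ => Finset.range (b ^ n)

section DigitBox

variable {b s : ℕ}

lemma mem_digitBox {n : ℕ} {k : Fin s → ℕ} : k ∈ digitBox b s n ↔ ∀ j, k j < b ^ n := by
  simp only [digitBox, Fintype.mem_piFinset, Finset.mem_range]

lemma digitBox_mono (hb : 1 < b) : Monotone (digitBox b s) := fun _ _ h =>
  Fintype.piFinset_subset _ _ fun _ => Finset.range_mono (Nat.pow_le_pow_right hb.le h)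

lemma exists_subset_digitBox (hb : 1 < b) (E : Finset (Fin s → ℕ)) : ∃ d, E ⊆ digitBox b s d := by
  refine ⟨∑ k ∈ E, ∑ j, k j, fun k hk => mem_digitBox.2 fun j => ?_⟩
  have le_sum : k j ≤ ∑ k ∈ E, ∑ j, k j :=
    (Finset.single_le_sum (fun _ _ => Nat.zero_le _) (Finset.mem_univ j)).trans
      (Finset.single_le_sum (f := fun k : Fin s → ℕ => ∑ j, k j) (fun _ _ => Nat.zero_le _) hk)
  exact (Nat.lt_pow_self hb).trans_le (Nat.pow_le_pow_right hb.le le_sum)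

lemma prod_dickWeight_nonneg (b α : ℕ) (k : Fin s → ℕ) : 0 ≤ ∏ j, dickWeight b α (k j) :=
  Finset.prod_nonneg fun _ _ => dickWeight_nonneg _ _ _

lemma sum_digitBox_prod_dickWeight (b s α n : ℕ) :
    ∑ k ∈ digitBox b s n, ∏ j, dickWeight b α (k j) = dickWeightSum b α n ^ s := by
  rw [digitBox, ← Finset.prod_univ_sum, Finset.prod_const, Finset.card_univ, Fintype.card_fin,
    dickWeightSum]

lemma sum_sdiff_digitBox_prod_dickWeight (hb : 1 < b) (s α A d : ℕ) :
    ∑ k ∈ digitBox b s (A + d) \ digitBox b s A, ∏ j, dickWeight b α (k j) =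
      dickWeightSum b α (A + d) ^ s - dickWeightSum b α A ^ s := by
  rw [← sum_digitBox_prod_dickWeight, ← sum_digitBox_prod_dickWeight]
  exact eq_sub_of_add_eq (Finset.sum_sdiff (digitBox_mono hb (Nat.le_add_right A d)))

/-- The sums of the weights with parameter `α - 1 ≥ 2` are bounded, which makes the tails of the
one-dimensional sums `O(b ^ (-A))`. -/
lemma exists_sum_prod_dickWeight_compl_digitBox_le {α : ℕ} (hb : 1 < b) (hα : 3 ≤ α) (s : ℕ) :
    ∃ C : ℝ, 0 ≤ C ∧ ∀ (A : ℕ) (E : Finset (Fin s → ℕ)), (∀ k ∈ E, ¬ ∀ j, k j < b ^ A) →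
      ∑ k ∈ E, ∏ j, dickWeight b α (k j) ≤ C * ((b : ℝ) ^ A)⁻¹ := by
  obtain ⟨a, rfl⟩ := Nat.exists_eq_add_of_le' hα
  obtain ⟨C, hC⟩ := exists_dickWeightSum_le a hb
  obtain ⟨B, hB⟩ := exists_dickWeightSum_le (a + 1) hb
  have hC0 : 0 ≤ C := (dickWeightSum_nonneg _ _ _).trans (hC 0)
  have hB0 : 0 ≤ B := (dickWeightSum_nonneg _ _ _).trans (hB 0)
  refine ⟨C * s * B ^ (s - 1), by positivity, fun A E hE => ?_⟩
  obtain ⟨d, hd⟩ := exists_subset_digitBox hb E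
  set x := dickWeightSum b (a + 3) (A + d)
  set y := dickWeightSum b (a + 3) A
  have hy : 0 ≤ y := dickWeightSum_nonneg _ _ _
  have hyx : y ≤ x := dickWeightSum_mono _ hb (Nat.le_add_right A d)
  have hx : 0 ≤ x := hy.trans hyx
  have sub_le : x - y ≤ C * ((b : ℝ) ^ A)⁻¹ := by
    rw [sub_le_iff_le_add']
    refine (dickWeightSum_add_le hb hC A d).trans ?_
    gcongr
    exact sub_le_self _ (by positivity)
  have hE_sub : E ⊆ digitBox b s (A + d) \ digitBox b s A := fun k hk => Finset.mem_sdiff.2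
    ⟨digitBox_mono hb (Nat.le_add_left d A) (hd hk), fun h => hE k hk (mem_digitBox.1 h)⟩
  calc ∑ k ∈ E, ∏ j, dickWeight b (a + 3) (k j)
      ≤ ∑ k ∈ digitBox b s (A + d) \ digitBox b s A, ∏ j, dickWeight b (a + 3) (k j) :=
        Finset.sum_le_sum_of_subset_of_nonneg hE_sub fun _ _ _ => prod_dickWeight_nonneg _ _ _
    _ = x ^ s - y ^ s := sum_sdiff_digitBox_prod_dickWeight hb s (a + 3) A d
    _ ≤ |x - y| * s * max |x| |y| ^ (s - 1) := (le_abs_self _).trans (abs_pow_sub_pow_le _ _ _)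
    _ = (x - y) * s * x ^ (s - 1) := by
        rw [abs_of_nonneg hy, abs_of_nonneg hx, max_eq_left hyx,
          abs_of_nonneg (sub_nonneg.2 hyx)]
    _ ≤ C * ((b : ℝ) ^ A)⁻¹ * s * B ^ (s - 1) := by
        have hxB : x ^ (s - 1) ≤ B ^ (s - 1) := pow_le_pow_left₀ hx (hB _) _
        gcongr
    _ = C * s * B ^ (s - 1) * ((b : ℝ) ^ A)⁻¹ := by ring

end DigitBox

/-! ### The leading digits of a frequency -/

/-- The position of the `(a + 1)`-st nonzero digit of `k`, counted from the top; the digits below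
it have no influence on `μ_{a+1}(k)`. It is `0` when `k` has at most `a` nonzero digits. -/
def cutPos (b : ℕ) : ℕ → ℕ → ℕ
  | 0, k => Nat.log b k
  | a + 1, k => cutPos b a (k % b ^ Nat.log b k)

/-- The leading digits of `k`, down to position `cutPos b a k`, recorded together with that
position. -/
def leadingDigits (b a k : ℕ) : ℕ × ℕ := (cutPos b a k, k / b ^ cutPos b a k)

section CutPos

variable {b : ℕ} (a : ℕ)

lemma cutPos_zero_right (b : ℕ) : cutPos b a 0 = 0 := by
  induction a with
  | zero => exact Nat.log_zero_right b
  | succ a ih => rw [cutPos, Nat.zero_mod, ih]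

lemma cutPos_leading_zero {n c r : ℕ} (hc0 : 0 < c) (hc : c < b) (hr : r < b ^ n) :
    cutPos b 0 (c * b ^ n + r) = n := by
  rw [cutPos, log_leading hc0 hc hr]

lemma cutPos_leading_succ {n c r : ℕ} (hc0 : 0 < c) (hc : c < b) (hr : r < b ^ n) :
    cutPos b (a + 1) (c * b ^ n + r) = cutPos b a r := by
  rw [cutPos, log_leading hc0 hc hr, leading_mod hr]

lemma cutPos_le_log (b k : ℕ) : cutPos b a k ≤ Nat.log b k := by
  induction a generalizing k with
  | zero => exact le_rfl
  | succ a ih => exact (ih _).trans (Nat.log_mono_right (Nat.mod_le _ _))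

lemma cutPos_le_of_lt_pow {k n : ℕ} (hb : 1 < b) (hk : k < b ^ n) : cutPos b a k ≤ n :=
  (cutPos_le_log a b k).trans ((Nat.log_mono_right hk.le).trans (Nat.log_pow hb n).le)

lemma mul_cutPos_le_dick (hb : 1 < b) (k : ℕ) : (a + 1) * cutPos b a k ≤ dick b (a + 1) k := by
  induction a generalizing k with
  | zero =>
    obtain rfl | ⟨n, c, r, hc0, hc, hr, rfl⟩ := eq_zero_or_leading hb k
    · simp only [cutPos_zero_right, mul_zero, Nat.zero_le]
    · rw [cutPos_leading_zero hc0 hc hr, dick_leading 0 hb hc0 hc hr]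
      omega
  | succ a ih =>
    obtain rfl | ⟨n, c, r, hc0, hc, hr, rfl⟩ := eq_zero_or_leading hb k
    · simp only [cutPos_zero_right, mul_zero, Nat.zero_le]
    · have hcut := cutPos_le_of_lt_pow a hb hr
      have := ih r
      rw [cutPos_leading_succ a hc0 hc hr, dick_leading (a + 1) hb hc0 hc hr, Nat.succ_mul]
      omega

lemma cutPos_le_dick (hb : 1 < b) (k : ℕ) : cutPos b a k ≤ dick b (a + 1) k :=
  (Nat.le_mul_of_pos_left _ a.succ_pos).trans (mul_cutPos_le_dick a hb k)

lemma lt_pow_dick_sub_cutPos {a : ℕ} (hb : 1 < b) (ha : 1 ≤ a) (k : ℕ) :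
    k < b ^ (dick b (a + 1) k - cutPos b a k) := by
  obtain ⟨a, rfl⟩ := Nat.exists_eq_add_of_le' ha
  obtain rfl | ⟨n, c, r, hc0, hc, hr, rfl⟩ := eq_zero_or_leading hb k
  · positivity
  · have := cutPos_le_dick a hb r
    refine (leading_lt_pow_succ hc hr).trans_le (Nat.pow_le_pow_right hb.le ?_)
    rw [cutPos_leading_succ a hc0 hc hr, dick_leading (a + 1) hb hc0 hc hr]
    omega

lemma leadingDigits_zero_right (b : ℕ) : leadingDigits b a 0 = (0, 0) := by
  rw [leadingDigits, cutPos_zero_right, Nat.zero_div]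

lemma leadingDigits_leading_zero {n c r : ℕ} (hb : 1 < b) (hc0 : 0 < c) (hc : c < b)
    (hr : r < b ^ n) : leadingDigits b 0 (c * b ^ n + r) = (n, c) := by
  rw [leadingDigits, cutPos_leading_zero hc0 hc hr, leading_div hb le_rfl, Nat.sub_self, pow_zero,
    mul_one, Nat.div_eq_of_lt hr, add_zero]

lemma leadingDigits_leading_succ {n c r : ℕ} (hb : 1 < b) (hc0 : 0 < c) (hc : c < b)
    (hr : r < b ^ n) : leadingDigits b (a + 1) (c * b ^ n + r) =
      ((leadingDigits b a r).1,
        c * b ^ (n - (leadingDigits b a r).1) + (leadingDigits b a r).2) := by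
  rw [leadingDigits, cutPos_leading_succ a hc0 hc hr,
    leading_div hb (cutPos_le_of_lt_pow a hb hr), leadingDigits]

lemma image_leadingDigits_zero_subset (hb : 1 < b) (T : ℕ) :
    (Finset.range (b ^ T)).image (leadingDigits b 0) ⊆
      insert (0, 0) (Finset.range T ×ˢ Finset.range b) := by
  refine Finset.image_subset_iff.2 fun k hk => ?_
  obtain rfl | ⟨n, c, r, hc0, hc, hr, rfl⟩ := eq_zero_or_leading hb k
  · exact leadingDigits_zero_right 0 b ▸ Finset.mem_insert_self _ _
  · rw [leadingDigits_leading_zero hb hc0 hc hr]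
    exact Finset.mem_insert_of_mem (Finset.mk_mem_product
      (Finset.mem_range.2 (lt_of_leading_lt_pow hb hc0 (Finset.mem_range.1 hk)))
      (Finset.mem_range.2 hc))

lemma image_leadingDigits_succ_subset (hb : 1 < b) (T : ℕ) :
    (Finset.range (b ^ T)).image (leadingDigits b (a + 1)) ⊆
      insert (0, 0) (((Finset.range T ×ˢ Finset.range b) ×ˢ
        (Finset.range (b ^ T)).image (leadingDigits b a)).image
          fun x => (x.2.1, x.1.2 * b ^ (x.1.1 - x.2.1) + x.2.2)) := by
  refine Finset.image_subset_iff.2 fun k hk => ?_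
  obtain rfl | ⟨n, c, r, hc0, hc, hr, rfl⟩ := eq_zero_or_leading hb k
  · exact leadingDigits_zero_right (a + 1) b ▸ Finset.mem_insert_self _ _
  · have hnT := lt_of_leading_lt_pow hb hc0 (Finset.mem_range.1 hk)
    have hrT := hr.trans_le (Nat.pow_le_pow_right hb.le hnT.le)
    rw [leadingDigits_leading_succ a hb hc0 hc hr]
    exact Finset.mem_insert_of_mem (Finset.mem_image.2 ⟨((n, c), leadingDigits b a r),
      Finset.mk_mem_product (Finset.mk_mem_product (Finset.mem_range.2 hnT)
        (Finset.mem_range.2 hc)) (Finset.mem_image_of_mem _ (Finset.mem_range.2 hrT)), rfl⟩)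

/-- The leading digits are determined by at most `a + 1` pairs of a position and a digit. -/
lemma card_image_leadingDigits_le (hb : 1 < b) (T : ℕ) :
    ((Finset.range (b ^ T)).image (leadingDigits b a)).card ≤ (1 + b * T) ^ (a + 1) := by
  induction a with
  | zero =>
    refine ((Finset.card_le_card (image_leadingDigits_zero_subset hb T)).trans
      (Finset.card_insert_le _ _)).trans_eq ?_
    rw [Finset.card_product, Finset.card_range, Finset.card_range]
    ring
  | succ a ih =>
    calc _ ≤ T * b * (1 + b * T) ^ (a + 1) + 1 := by
          refine (Finset.card_le_card (image_leadingDigits_succ_subset a hb T)).trans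
            ((Finset.card_insert_le _ _).trans (Nat.succ_le_succ (Finset.card_image_le.trans ?_)))
          rw [Finset.card_product, Finset.card_product, Finset.card_range, Finset.card_range]
          exact Nat.mul_le_mul_left _ ih
      _ ≤ T * b * (1 + b * T) ^ (a + 1) + (1 + b * T) ^ (a + 1) :=
          Nat.add_le_add_left (Nat.one_le_pow _ _ (by omega)) _
      _ = (1 + b * T) ^ (a + 1 + 1) := by ring

end CutPos

/-- The number of digits of the vector `l` that lie below the cut positions and hence do not
influence `μ_{a+1}(l)`. -/
def cutSum (b a : ℕ) {s : ℕ} (l : Fin s → ℕ) : ℕ := ∑ j, cutPos b a (l j)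

/-- The Dick metric `μ_{a+1}(l)` diminished by `(cutSum b a l - m)₊`. At most
`b ^ (cutSum b a l - m)₊` elements of the dual net share the leading digits of `l`, so their
weights sum to at most `b ^ (-reducedDick b a m l)`. -/
def reducedDick (b a m : ℕ) {s : ℕ} (l : Fin s → ℕ) : ℕ :=
  dickVec b (a + 1) l - (cutSum b a l - m)

section ReducedDick

variable {b s : ℕ} (a m : ℕ) (l : Fin s → ℕ)

lemma mul_cutSum_le_dickVec (hb : 1 < b) : (a + 1) * cutSum b a l ≤ dickVec b (a + 1) l := by
  rw [cutSum, dickVec, Finset.mul_sum]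
  exact Finset.sum_le_sum fun j _ => mul_cutPos_le_dick a hb (l j)

lemma cutSum_le_dickVec (hb : 1 < b) : cutSum b a l ≤ dickVec b (a + 1) l :=
  (Nat.le_mul_of_pos_left _ a.succ_pos).trans (mul_cutSum_le_dickVec a l hb)

lemma reducedDick_add (hb : 1 < b) :
    reducedDick b a m l + (cutSum b a l - m) = dickVec b (a + 1) l :=
  Nat.sub_add_cancel ((Nat.sub_le _ _).trans (cutSum_le_dickVec a l hb))

lemma lt_pow_reducedDick {a : ℕ} (hb : 1 < b) (ha : 1 ≤ a) (j : Fin s) :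
    l j < b ^ reducedDick b a m l := by
  refine (lt_pow_dick_sub_cutPos hb ha (l j)).trans_le (Nat.pow_le_pow_right hb.le ?_)
  calc dick b (a + 1) (l j) - cutPos b a (l j)
      ≤ ∑ i, (dick b (a + 1) (l i) - cutPos b a (l i)) :=
        Finset.single_le_sum (f := fun i => dick b (a + 1) (l i) - cutPos b a (l i))
          (fun _ _ => Nat.zero_le _) (Finset.mem_univ j)
    _ = dickVec b (a + 1) l - cutSum b a l :=
        Finset.sum_tsub_distrib _ fun i _ => cutPos_le_dick a hb (l i)
    _ ≤ reducedDick b a m l := Nat.sub_le_sub_left (Nat.sub_le _ _) _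

lemma prod_dickWeight (b α : ℕ) :
    ∏ j, dickWeight b α (l j) = ((b : ℝ) ^ dickVec b α l)⁻¹ := by
  simp only [dickWeight, Finset.prod_inv_distrib, Finset.prod_pow_eq_pow_sum, dickVec]

end ReducedDick

/-! ### Sums of the weights over the dual net -/

lemma summable_one_add_mul_pow_mul_geometric {r : ℝ} (c : ℝ) (hr : |r| < 1) (n : ℕ) :
    Summable fun t : ℕ => (1 + c * t) ^ n * r ^ t := by
  simp only [add_comm (1 : ℝ), add_pow, one_pow, mul_one, mul_pow, Finset.sum_mul]
  refine summable_sum fun i _ => ?_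
  refine ((summable_pow_mul_geometric_of_norm_lt_one i hr).mul_left (c ^ i * n.choose i)).congr
    fun t => ?_
  ring

lemma exists_sum_one_add_mul_pow_mul_geometric_le {c r : ℝ} (hc : 0 ≤ c) (hr0 : 0 ≤ r)
    (hr1 : r < 1) (n : ℕ) : ∃ Z : ℝ, 0 ≤ Z ∧ ∀ (T₀ : ℕ) (I : Finset ℕ), (∀ T ∈ I, T₀ ≤ T) →
      ∑ T ∈ I, (1 + c * T) ^ n * r ^ T ≤ Z * ((1 + c * T₀) ^ n * r ^ T₀) := by
  classical
  let f : ℕ → ℝ := fun t => (1 + c * t) ^ n * r ^ t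
  have hf0 (t : ℕ) : 0 ≤ f t := by positivity
  have hf : Summable f :=
    summable_one_add_mul_pow_mul_geometric c ((abs_of_nonneg hr0).trans_lt hr1) n
  have f_add_le (T₀ t : ℕ) : f (T₀ + t) ≤ f t * f T₀ := by
    have base_le : 1 + c * (T₀ + t : ℕ) ≤ (1 + c * t) * (1 + c * T₀) := by
      have : 0 ≤ c * t * (c * T₀) := by positivity
      push_cast
      linarith
    calc f (T₀ + t) ≤ ((1 + c * t) * (1 + c * T₀)) ^ n * r ^ (T₀ + t) := by
          simp only [f]
          gcongr
      _ = f t * f T₀ := by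
          rw [mul_pow, pow_add]
          ring
  refine ⟨∑' t, f t, tsum_nonneg hf0, fun T₀ I hI => ?_⟩
  have injOn : Set.InjOn (· - T₀) (I : Set ℕ) := fun T hT T' hT' h => by
    have := hI T hT
    have := hI T' hT'
    simp only at h
    omega
  calc ∑ T ∈ I, f T ≤ ∑ T ∈ I, f (T - T₀) * f T₀ := Finset.sum_le_sum fun T hT => by
        simpa only [Nat.add_sub_cancel' (hI T hT)] using f_add_le T₀ (T - T₀)
    _ = (∑ t ∈ I.image (· - T₀), f t) * f T₀ := by
        rw [← Finset.sum_mul, Finset.sum_image injOn]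
    _ ≤ (∑' t, f t) * f T₀ :=
        mul_le_mul_of_nonneg_right (hf.sum_le_tsum _ fun t _ => hf0 t) (hf0 T₀)

namespace IsZeroNet

variable {b β s m : ℕ} [Fact b.Prime] {C : Fin (β * s) → Matrix (Fin m) (Fin m) (ZMod b)}
  {a : ℕ} {E : Finset (Fin s → ℕ)}

lemma mul_sub_le_reducedDick (hC : IsZeroNet C) (haβ : a + 1 ≤ β) {l : Fin s → ℕ}
    (hl : l ∈ dualNetInf b (interlace β s m C)) (hl0 : l ≠ 0) :
    (a + 1) * m - s * ((a + 1) * β) ≤ reducedDick b a m l := by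
  rw [reducedDick]
  rcases le_total (cutSum b a l) m with h | h
  · have := hC.mul_le_dickVec_add (by omega : 0 < a + 1) haβ hl hl0
    omega
  · have hcut := mul_cutSum_le_dickVec a l (Fact.out : b.Prime).one_lt
    have := Nat.mul_le_mul_left a h
    rw [Nat.succ_mul] at hcut ⊢
    omega

lemma sum_prod_dickWeight_le_of_leadingDigits_eq (hC : IsZeroNet C) (hβ : 0 < β) {T : ℕ}
    (hE : ∀ l ∈ E, l ∈ dualNetInf b (interlace β s m C)) (hT : ∀ l ∈ E, reducedDick b a m l = T)
    (key : Fin s → ℕ × ℕ) (hkey : ∀ l ∈ E, ∀ j, leadingDigits b a (l j) = key j) :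
    ∑ l ∈ E, ∏ j, dickWeight b (a + 1) (l j) ≤ ((b : ℝ) ^ T)⁻¹ := by
  have hb : 1 < b := (Fact.out : b.Prime).one_lt
  set e := ∑ j, (key j).1 - m
  have card_le : (E.card : ℝ) ≤ (b : ℝ) ^ e := by
    exact_mod_cast hC.card_le_of_div_eq hβ (fun j => (key j).1) (fun j => (key j).2) hE
      fun l hl j => by rw [← hkey l hl j, leadingDigits]
  have weight_eq : ∀ l ∈ E,
      ∏ j, dickWeight b (a + 1) (l j) = ((b : ℝ) ^ e)⁻¹ * ((b : ℝ) ^ T)⁻¹ := by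
    intro l hl
    have cutSum_eq : cutSum b a l = ∑ j, (key j).1 :=
      Finset.sum_congr rfl fun j _ => congrArg Prod.fst (hkey l hl j)
    rw [prod_dickWeight, ← reducedDick_add a m l hb, hT l hl, cutSum_eq, ← mul_inv, ← pow_add,
      add_comm]
  calc ∑ l ∈ E, ∏ j, dickWeight b (a + 1) (l j)
      = E.card * ((b : ℝ) ^ e)⁻¹ * ((b : ℝ) ^ T)⁻¹ := by
        rw [Finset.sum_congr rfl weight_eq, Finset.sum_const, nsmul_eq_mul, mul_assoc]
    _ ≤ 1 * ((b : ℝ) ^ T)⁻¹ := by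
        gcongr
        exact mul_inv_le_one_of_le₀ card_le (by positivity)
    _ = ((b : ℝ) ^ T)⁻¹ := one_mul _

lemma sum_prod_dickWeight_le_of_reducedDick_eq (hC : IsZeroNet C) (hβ : 0 < β) (ha : 1 ≤ a) {T : ℕ}
    (hE : ∀ l ∈ E, l ∈ dualNetInf b (interlace β s m C)) (hT : ∀ l ∈ E, reducedDick b a m l = T) :
    ∑ l ∈ E, ∏ j, dickWeight b (a + 1) (l j) ≤
      (1 + b * T : ℝ) ^ (s * (a + 1)) * ((b : ℝ) ^ T)⁻¹ := by
  classical
  have hb : 1 < b := (Fact.out : b.Prime).one_lt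
  let key : (Fin s → ℕ) → Fin s → ℕ × ℕ := fun l j => leadingDigits b a (l j)
  let keys : Finset (Fin s → ℕ × ℕ) :=
    Fintype.piFinset fun _ => (Finset.range (b ^ T)).image (leadingDigits b a)
  have key_mem : ∀ l ∈ E, key l ∈ keys := fun l hl => Fintype.mem_piFinset.2 fun j =>
    Finset.mem_image_of_mem _ (Finset.mem_range.2 (hT l hl ▸ lt_pow_reducedDick m l hb ha j))
  have card_keys_le : keys.card ≤ (1 + b * T) ^ (s * (a + 1)) := by
    rw [Fintype.card_piFinset_const, mul_comm s, pow_mul]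
    exact Nat.pow_le_pow_left (card_image_leadingDigits_le a hb T) s
  calc ∑ l ∈ E, ∏ j, dickWeight b (a + 1) (l j)
      = ∑ κ ∈ keys, ∑ l ∈ E with key l = κ, ∏ j, dickWeight b (a + 1) (l j) :=
        (Finset.sum_fiberwise_of_maps_to key_mem _).symm
    _ ≤ keys.card • ((b : ℝ) ^ T)⁻¹ := Finset.sum_le_card_nsmul _ _ _ fun κ _ =>
        hC.sum_prod_dickWeight_le_of_leadingDigits_eq hβ
          (fun l hl => hE l (Finset.mem_filter.1 hl).1)
          (fun l hl => hT l (Finset.mem_filter.1 hl).1) κ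
          fun l hl j => congrFun (Finset.mem_filter.1 hl).2 j
    _ ≤ (1 + b * T : ℝ) ^ (s * (a + 1)) * ((b : ℝ) ^ T)⁻¹ := by
        rw [nsmul_eq_mul]
        gcongr
        exact_mod_cast card_keys_le

lemma exists_sum_prod_dickWeight_dualNetInf_le_geometric (b s : ℕ) [Fact b.Prime] (ha : 1 ≤ a)
    (haβ : a + 1 ≤ β) : ∃ Z : ℝ, 0 ≤ Z ∧ ∀ (m : ℕ)
      (C : Fin (β * s) → Matrix (Fin m) (Fin m) (ZMod b)), IsZeroNet C →
      ∀ E : Finset (Fin s → ℕ), (∀ l ∈ E, l ∈ dualNetInf b (interlace β s m C) ∧ l ≠ 0) →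
        ∑ l ∈ E, ∏ j, dickWeight b (a + 1) (l j) ≤
          Z * ((1 + b * ((a + 1) * m - s * ((a + 1) * β) : ℕ) : ℝ) ^ (s * (a + 1)) *
            (b : ℝ)⁻¹ ^ ((a + 1) * m - s * ((a + 1) * β))) := by
  classical
  have hb : 1 < b := (Fact.out : b.Prime).one_lt
  obtain ⟨Z, hZ, hgeom⟩ := exists_sum_one_add_mul_pow_mul_geometric_le (Nat.cast_nonneg b)
    (by positivity : 0 ≤ (b : ℝ)⁻¹) (inv_lt_one_of_one_lt₀ (by exact_mod_cast hb)) (s * (a + 1))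
  refine ⟨Z, hZ, fun m C hC E hE => ?_⟩
  rw [← Finset.sum_fiberwise_of_maps_to fun l hl =>
    Finset.mem_image_of_mem (reducedDick b a m) hl]
  refine le_trans (Finset.sum_le_sum fun T _ => ?_) (hgeom _ (E.image (reducedDick b a m)) ?_)
  · rw [inv_pow]
    exact hC.sum_prod_dickWeight_le_of_reducedDick_eq (by omega) ha
      (fun l hl => (hE l (Finset.mem_filter.1 hl).1).1) fun l hl => (Finset.mem_filter.1 hl).2
  · exact Finset.forall_mem_image.2 fun l hl =>
      hC.mul_sub_le_reducedDick haβ (hE l hl).1 (hE l hl).2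

lemma exists_sum_prod_dickWeight_dualNetInf_le (b s : ℕ) [Fact b.Prime] {α : ℕ} (hα : 2 ≤ α)
    (hαβ : α ≤ β) : ∃ D : ℝ, 0 ≤ D ∧ ∀ m, 0 < m →
      ∀ C : Fin (β * s) → Matrix (Fin m) (Fin m) (ZMod b),
        IsZeroNet C → ∀ E : Finset (Fin s → ℕ),
          (∀ l ∈ E, l ∈ dualNetInf b (interlace β s m C) ∧ l ≠ 0) →
            ∑ l ∈ E, ∏ j, dickWeight b α (l j) ≤ D * (m : ℝ) ^ (s * α) * ((b : ℝ) ^ (α * m))⁻¹ := by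
  obtain ⟨a, rfl⟩ : ∃ a, α = a + 1 := ⟨α - 1, by omega⟩
  have hb : (1 : ℝ) ≤ b := by exact_mod_cast (Fact.out : b.Prime).one_lt.le
  obtain ⟨Z, hZ, hsum⟩ :=
    exists_sum_prod_dickWeight_dualNetInf_le_geometric b s (by omega : 1 ≤ a) hαβ
  set c := s * ((a + 1) * β)
  refine ⟨Z * (2 * b * (a + 1)) ^ (s * (a + 1)) * (b : ℝ) ^ c, by positivity,
    fun m hm C hC E hE => (hsum m C hC E hE).trans ?_⟩
  have base_le : 1 + b * ((a + 1) * m - c : ℕ) ≤ (2 * b * (a + 1) * m : ℝ) := by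
    have one_le : (1 : ℝ) ≤ b * ((a + 1 : ℕ) * m : ℕ) :=
      one_le_mul_of_one_le_of_one_le hb (by exact_mod_cast Nat.mul_pos a.succ_pos hm)
    have sub_le : (((a + 1) * m - c : ℕ) : ℝ) ≤ ((a + 1 : ℕ) * m : ℕ) := by
      exact_mod_cast Nat.sub_le _ _
    have := mul_le_mul_of_nonneg_left sub_le (zero_le_one.trans hb)
    push_cast at one_le this ⊢
    linarith
  have geometric_le :
      (b : ℝ)⁻¹ ^ ((a + 1) * m - c) ≤ (b : ℝ) ^ c * ((b : ℝ) ^ ((a + 1) * m))⁻¹ := by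
    rw [inv_pow, ← div_eq_mul_inv, le_div_iff₀ (by positivity), inv_mul_le_iff₀ (by positivity),
      ← pow_add]
    exact pow_le_pow_right₀ hb (by omega)
  calc _ ≤ Z * ((2 * b * (a + 1) * m : ℝ) ^ (s * (a + 1)) *
        ((b : ℝ) ^ c * ((b : ℝ) ^ ((a + 1) * m))⁻¹)) := by
        gcongr
    _ = _ := by
        rw [mul_pow _ (m : ℝ)]
        ring

end IsZeroNet

/-! ### The discretization part -/

lemma sum_subtype_le_of_forall_sum_le {ι : Type*} {p : ι → Prop} {u : ι → ℝ} {U : ℝ}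
    (h : ∀ E : Finset ι, (∀ i ∈ E, p i) → ∑ i ∈ E, u i ≤ U) (E : Finset {i // p i}) :
    ∑ i ∈ E, u i.1 ≤ U := by
  simpa only [Finset.sum_map, Function.Embedding.subtype_apply] using
    h (E.map (Function.Embedding.subtype p)) fun _ hi => Finset.property_of_mem_map_subtype E hi

lemma exists_hasSum_prod_le {ι κ : Type*} {f : ι × κ → ℝ} {u : ι → ℝ} {v : κ → ℝ} {U V : ℝ}
    (hf : ∀ x, 0 ≤ f x) (hu : ∀ i, 0 ≤ u i) (hv : ∀ j, 0 ≤ v j)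
    (hfuv : ∀ x, f x ≤ u x.1 * v x.2) (hU : ∀ E : Finset ι, ∑ i ∈ E, u i ≤ U)
    (hV : ∀ E : Finset κ, ∑ j ∈ E, v j ≤ V) : ∃ S ≤ U * V, HasSum f S := by
  have u_summable : Summable u := summable_of_sum_le hu hU
  have v_summable : Summable v := summable_of_sum_le hv hV
  have uv_summable : Summable fun x : ι × κ => u x.1 * v x.2 :=
    u_summable.mul_of_nonneg v_summable hu hv
  have f_summable : Summable f := uv_summable.of_nonneg_of_le hf hfuv
  refine ⟨∑' x, f x, ?_, f_summable.hasSum⟩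
  calc ∑' x, f x ≤ ∑' x : ι × κ, u x.1 * v x.2 := f_summable.tsum_le_tsum hfuv uv_summable
    _ = (∑' i, u i) * ∑' j, v j := (u_summable.tsum_mul_tsum v_summable uv_summable).symm
    _ ≤ U * V := mul_le_mul (u_summable.tsum_le_of_sum_le hU) (v_summable.tsum_le_of_sum_le hV)
        (tsum_nonneg hv) ((Finset.sum_nonneg fun i _ => hu i).trans (hU ∅))

theorem discretization_part_bound_general (b s : ℕ) [Fact b.Prime] {α β : ℕ} (hα : 3 ≤ α)
    (hαβ : α ≤ β) : ∃ A : ℝ, 0 < A ∧ ∀ m, 0 < m →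
      ∀ C : Fin (β * s) → Matrix (Fin m) (Fin m) (ZMod b), IsZeroNet C →
        ∃ S ≤ A * Real.log ((b : ℝ) ^ m) ^ (s * α) / ((b : ℝ) ^ m) ^ (α + β),
          HasSum (fun p : {k : Fin s → ℕ // ¬ ∀ j, k j < b ^ (β * m)} ×
            {l : Fin s → ℕ // l ∈ dualNetInf b (interlace β s m C) ∧ l ≠ 0} =>
              ‖KhatS b α s p.1.1 p.2.1‖) S := by
  have hb : 1 < b := (Fact.out : b.Prime).one_lt
  obtain ⟨D, hD, norm_le⟩ := exists_norm_KhatS_le hb (by omega : 1 ≤ α) s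
  obtain ⟨U, hU, sum_k_le⟩ := exists_sum_prod_dickWeight_compl_digitBox_le hb hα s
  obtain ⟨V, hV, sum_l_le⟩ :=
    IsZeroNet.exists_sum_prod_dickWeight_dualNetInf_le b s (by omega : 2 ≤ α) hαβ
  have hlog : 0 < Real.log b := Real.log_pos (by exact_mod_cast hb)
  refine ⟨(D * U * V + 1) / Real.log b ^ (s * α), by positivity, fun m hm C hC => ?_⟩
  obtain ⟨S, S_le, hasSum_S⟩ := exists_hasSum_prod_le
    (f := fun p : {k : Fin s → ℕ // ¬ ∀ j, k j < b ^ (β * m)} ×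
      {l : Fin s → ℕ // l ∈ dualNetInf b (interlace β s m C) ∧ l ≠ 0} =>
        ‖KhatS b α s p.1.1 p.2.1‖)
    (u := fun k => D * ∏ j, dickWeight b α (k.1 j)) (v := fun l => ∏ j, dickWeight b α (l.1 j))
    (fun _ => norm_nonneg _) (fun _ => mul_nonneg hD (prod_dickWeight_nonneg _ _ _))
    (fun _ => prod_dickWeight_nonneg _ _ _)
    (fun p => (norm_le p.1.1 p.2.1).trans_eq (mul_assoc _ _ _).symm)
    (fun E => by
      rw [← Finset.mul_sum]
      exact mul_le_mul_of_nonneg_left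
        (sum_subtype_le_of_forall_sum_le (sum_k_le (β * m)) E) hD)
    (sum_subtype_le_of_forall_sum_le (sum_l_le m hm C hC))
  refine ⟨S, S_le.trans ?_, hasSum_S⟩
  calc D * (U * ((b : ℝ) ^ (β * m))⁻¹) * (V * (m : ℝ) ^ (s * α) * ((b : ℝ) ^ (α * m))⁻¹)
      = D * U * V * ((m : ℝ) ^ (s * α) / ((b : ℝ) ^ m) ^ (α + β)) := by
        rw [← pow_mul, mul_add, pow_add, mul_comm β, mul_comm α m]
        field_simp
    _ ≤ (D * U * V + 1) * ((m : ℝ) ^ (s * α) / ((b : ℝ) ^ m) ^ (α + β)) := by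
        gcongr
        exact le_add_of_nonneg_right zero_le_one
    _ = _ := by
        rw [Real.log_pow, mul_pow]
        field_simp

/-- Proposition 2: the discretization part, `α ≥ 3`. Under the
assumptions of the main theorem with `α ≥ 3`, there is `A > 0` such that for all `w`, the
digital net `P` of the paper's construction with `N = b^{gw}` points satisfies
`∑_{k ∉ {0,…,b^{βgw}-1}^s} ∑_{l ∈ P∞⊥\{0}} |K̂_{α,s}(k,l)| ≤ A (log N)^{sα} / N^{3α}`. -/
theorem discretization_part_bound
    (b s α β g : ℕ) (hb : b.Prime) (hs : 0 < s) (hα : 3 ≤ α) (hβ : 2 * α ≤ β)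
    (hg1 : 2 * α * s ≤ g) (hg2 : s * (β - 1) / 2 ≤ g) (hbs : β * g * s ≤ b)
    (βe : ℕ → ℕ → ZMod b)
    (hdist : ∀ j l j' l', j < β * s → l < g → j' < β * s → l' < g →
      βe j l = βe j' l' → j = j' ∧ l = l') :
    ∃ A : ℝ, 0 < A ∧ ∀ w : ℕ, 0 < w →
      (∑' p : {k : Fin s → ℕ // ¬ ∀ j, k j < b ^ (β * (g * w))} ×
          {l : Fin s → ℕ //
            l ∈ dualNetInf b (interlace β s (g * w) fun j => csMatrix b w (g * w) (βe j.1)) ∧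
            l ≠ 0},
          ‖KhatS b α s p.1.1 p.2.1‖) ≤
        A * Real.log ((b : ℝ) ^ (g * w)) ^ (s * α) / ((b : ℝ) ^ (g * w)) ^ (3 * α) := by
  have : Fact b.Prime := ⟨hb⟩
  have hg : 0 < g := lt_of_lt_of_le (by positivity) hg1
  have nodes_injective : Function.Injective fun p : Fin (β * s) × Fin g => βe p.1 p.2 :=
    fun p q hpq => by
      obtain ⟨h₁, h₂⟩ := hdist _ _ _ _ p.1.2 p.2.2 q.1.2 q.2.2 hpq
      exact Prod.ext (Fin.ext h₁) (Fin.ext h₂)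
  obtain ⟨A, hA, bound⟩ := discretization_part_bound_general b s hα (by omega : α ≤ β)
  refine ⟨A, hA, fun w hw => ?_⟩
  obtain ⟨S, S_le, hasSum_S⟩ := bound (g * w) (Nat.mul_pos hg hw) _
    (isZeroNet_csMatrix (node := fun j => βe j.1) nodes_injective)
  have hb1 : (1 : ℝ) ≤ b := by exact_mod_cast hb.one_lt.le
  have hlog : 0 ≤ Real.log ((b : ℝ) ^ (g * w)) := Real.log_nonneg (one_le_pow₀ hb1)
  rw [hasSum_S.tsum_eq]
  refine S_le.trans ?_
  gcongr
  · exact one_le_pow₀ hb1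
  · omega
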